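/- arXiv:2112.14427 — 3 statements merged into one kernel-verified Lean document; each statement's English description precedes it below -/
import Mathlib

section
/- Let x ≥ 3, q a positive integer with 1 ≤ q ≤ x^{1/4}/(log x)^{3/2}, and a an integer with 1 ≤ a ≤ q. Let S(x;q,a) be the number of distinct values m = ⌊x/n⌋ (over positive integers n ≤ x) with m ≡ a (mod q). Then S(x;q,a) = 2√x/q + O((x/q)^{1/3} log x), with an absolute implied constant. -/
/-- The additive character `t ↦ exp (2 π i t)`. -/
noncomputable def expChar (t : ℝ) : ℂ := Complex.exp ((2 * Real.pi * t : ℝ) * Complex.I)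

lemma norm_expChar (t : ℝ) : ‖expChar t‖ = 1 := Complex.norm_exp_ofReal_mul_I _

lemma expChar_add (s t : ℝ) : expChar (s + t) = expChar s * expChar t := by
  unfold expChar
  rw [← Complex.exp_add]
  congr 1
  push_cast
  ring

lemma expChar_intCast (k : ℤ) : expChar k = 1 := by
  unfold expChar
  rw [Complex.exp_eq_one_iff]
  exact ⟨k, by push_cast; ring⟩

lemma expChar_re (t : ℝ) : (expChar t).re = Real.cos (2 * Real.pi * t) :=
  Complex.exp_ofReal_mul_I_re _

lemma expChar_im (t : ℝ) : (expChar t).im = Real.sin (2 * Real.pi * t) :=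
  Complex.exp_ofReal_mul_I_im _

lemma two_mul_le_sin_pi_mul {θ t : ℝ} (hθ : 0 < θ) (h1 : θ ≤ t) (h2 : t ≤ 1 - θ) :
    2 * θ ≤ Real.sin (Real.pi * t) := by
  have hπ := Real.pi_pos
  rcases le_total t (1 / 2) with h | h
  · have := Real.mul_le_sin (x := Real.pi * t) (by nlinarith) (by nlinarith)
    have h3 : 2 / Real.pi * (Real.pi * t) = 2 * t := by field_simp
    linarith
  · have := Real.mul_le_sin (x := Real.pi * (1 - t)) (by nlinarith) (by nlinarith)
    have h3 : 2 / Real.pi * (Real.pi * (1 - t)) = 2 * (1 - t) := by field_simp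
    have h4 : Real.sin (Real.pi * (1 - t)) = Real.sin (Real.pi * t) := by
      rw [mul_sub, mul_one, Real.sin_pi_sub]
    linarith

/-- The inverse of `1 - expChar t`, see `halfCot_mul`. -/
noncomputable def halfCot (t : ℝ) : ℂ := ⟨1 / 2, Real.cot (Real.pi * t) / 2⟩

lemma halfCot_mul {t : ℝ} (ht : Real.sin (Real.pi * t) ≠ 0) :
    halfCot t * (1 - expChar t) = 1 := by
  have hc : Real.cos (2 * Real.pi * t) = 1 - 2 * Real.sin (Real.pi * t) ^ 2 := by
    rw [mul_assoc, Real.cos_two_mul, Real.cos_sq']; ring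
  have hs : Real.sin (2 * Real.pi * t) = 2 * Real.sin (Real.pi * t) * Real.cos (Real.pi * t) := by
    rw [mul_assoc, Real.sin_two_mul]
  have h1 := Real.sin_sq_add_cos_sq (Real.pi * t)
  apply Complex.ext
  · simp only [Complex.mul_re, Complex.sub_re, Complex.sub_im, Complex.one_re, Complex.one_im,
      expChar_re, expChar_im, halfCot, Real.cot_eq_cos_div_sin, hc, hs]
    field_simp
    linear_combination (2 * Real.sin (Real.pi * t)) * h1
  · simp only [Complex.mul_im, Complex.sub_re, Complex.sub_im, Complex.one_re, Complex.one_im,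
      expChar_re, expChar_im, halfCot, Real.cot_eq_cos_div_sin, hc, hs]
    field_simp
    ring

lemma norm_halfCot_sub {s t : ℝ} (h : Real.cot (Real.pi * t) ≤ Real.cot (Real.pi * s)) :
    ‖halfCot s - halfCot t‖ = (Real.cot (Real.pi * s) - Real.cot (Real.pi * t)) / 2 := by
  unfold halfCot
  generalize Real.cot (Real.pi * s) = u at *
  generalize Real.cot (Real.pi * t) = v at *
  have : (⟨1 / 2, u / 2⟩ : ℂ) - ⟨1 / 2, v / 2⟩ = (((u - v) / 2 : ℝ) : ℂ) * Complex.I := by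
    apply Complex.ext
    · simp
    · simp; ring
  rw [this, norm_mul, Complex.norm_I, mul_one, Complex.norm_real, Real.norm_eq_abs,
    abs_of_nonneg (by linarith)]

lemma abs_cot_le {θ t : ℝ} (hθ : 0 < θ) (h1 : θ ≤ t) (h2 : t ≤ 1 - θ) :
    |Real.cot (Real.pi * t)| ≤ 1 / (2 * θ) := by
  have h := two_mul_le_sin_pi_mul hθ h1 h2
  rw [Real.cot_eq_cos_div_sin, abs_div, abs_of_pos (by linarith : 0 < Real.sin (Real.pi * t))]
  exact div_le_div₀ zero_le_one (Real.abs_cos_le_one _) (by linarith) h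

lemma norm_halfCot_le {θ t : ℝ} (hθ : 0 < θ) (h1 : θ ≤ t) (h2 : t ≤ 1 - θ) :
    ‖halfCot t‖ ≤ 1 / (2 * θ) := by
  have h := Complex.norm_le_abs_re_add_abs_im (halfCot t)
  have h3 := abs_cot_le hθ h1 h2
  have h4 : (1 : ℝ) ≤ 1 / (2 * θ) := by rw [le_div_iff₀ (by linarith)]; linarith
  simp only [halfCot, abs_div, abs_two, abs_one] at h ⊢
  linarith

lemma cot_pi_mul_anti {s t : ℝ} (h0 : 0 < s) (hst : s ≤ t) (h1 : t < 1) :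
    Real.cot (Real.pi * t) ≤ Real.cot (Real.pi * s) := by
  have hπ := Real.pi_pos
  have hs : 0 < Real.sin (Real.pi * s) :=
    Real.sin_pos_of_pos_of_lt_pi (by positivity) (by nlinarith)
  have ht : 0 < Real.sin (Real.pi * t) :=
    Real.sin_pos_of_pos_of_lt_pi (by nlinarith) (by nlinarith)
  have hd : 0 ≤ Real.sin (Real.pi * t - Real.pi * s) :=
    Real.sin_nonneg_of_nonneg_of_le_pi (by nlinarith) (by nlinarith)
  rw [Real.cot_eq_cos_div_sin, Real.cot_eq_cos_div_sin, div_le_div_iff₀ ht hs]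
  rw [Real.sin_sub] at hd
  linarith

/-- The Kusmin–Landau inequality when the increments lie in `[θ, 1 - θ]`. -/
lemma norm_sum_expChar_le_of_mem_unit (g : ℕ → ℝ) {a b : ℕ} (hab : a ≤ b) {θ : ℝ} (hθ : 0 < θ)
    (hlo : ∀ n ∈ Finset.Icc a b, θ ≤ g (n + 1) - g n)
    (hhi : ∀ n ∈ Finset.Icc a b, g (n + 1) - g n ≤ 1 - θ)
    (hanti : ∀ n, a ≤ n → n < b → g (n + 2) - g (n + 1) ≤ g (n + 1) - g n) :
    ‖∑ n ∈ Finset.Icc a b, expChar (g n)‖ ≤ 5 / (2 * θ) := by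
  have hsin : ∀ n ∈ Finset.Icc a b, Real.sin (Real.pi * (g (n + 1) - g n)) ≠ 0 := fun n hn => by
    have := two_mul_le_sin_pi_mul hθ (hlo n hn) (hhi n hn)
    linarith
  have hstep : ∀ n ∈ Finset.Icc a b, expChar (g n) =
      halfCot (g (n + 1) - g n) * (expChar (g n) - expChar (g (n + 1))) := fun n hn => by
    have h := halfCot_mul (hsin n hn)
    have h2 : expChar (g (n + 1)) = expChar (g n) * expChar (g (n + 1) - g n) := by
      rw [← expChar_add]; congr 1; ring
    rw [h2]
    linear_combination (-expChar (g n)) * h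
  have key : ∀ m, a ≤ m → m ≤ b →
      ‖∑ n ∈ Finset.Ico a m, expChar (g n) + halfCot (g (m + 1) - g m) * expChar (g m)‖ ≤
        ‖halfCot (g (a + 1) - g a)‖ + (Real.cot (Real.pi * (g (m + 1) - g m)) -
          Real.cot (Real.pi * (g (a + 1) - g a))) / 2 := by
    intro m ham
    induction m, ham using Nat.le_induction with
    | base => intro _; simp [norm_expChar]
    | succ m ham ih =>
      intro hmb
      have hm : m ∈ Finset.Icc a b := Finset.mem_Icc.2 ⟨ham, by omega⟩
      have hm' : m + 1 ∈ Finset.Icc a b := Finset.mem_Icc.2 ⟨by omega, hmb⟩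
      have hmono : Real.cot (Real.pi * (g (m + 1) - g m)) ≤
          Real.cot (Real.pi * (g (m + 1 + 1) - g (m + 1))) :=
        cot_pi_mul_anti (by linarith [hlo _ hm']) (hanti m ham (by omega))
          (by linarith [hhi _ hm])
      have hdiff : ‖halfCot (g (m + 1 + 1) - g (m + 1)) - halfCot (g (m + 1) - g m)‖ =
          (Real.cot (Real.pi * (g (m + 1 + 1) - g (m + 1))) -
            Real.cot (Real.pi * (g (m + 1) - g m))) / 2 := norm_halfCot_sub hmono
      rw [Finset.sum_Ico_succ_top ham]
      have heq : ∑ n ∈ Finset.Ico a m, expChar (g n) + expChar (g m) +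
          halfCot (g (m + 1 + 1) - g (m + 1)) * expChar (g (m + 1)) =
          (∑ n ∈ Finset.Ico a m, expChar (g n) + halfCot (g (m + 1) - g m) * expChar (g m)) +
          (halfCot (g (m + 1 + 1) - g (m + 1)) - halfCot (g (m + 1) - g m)) *
            expChar (g (m + 1)) := by
        linear_combination hstep m hm
      rw [heq]
      refine (norm_add_le _ _).trans ?_
      rw [norm_mul, norm_expChar, mul_one, hdiff]
      linarith [ih (by omega)]
  have ha : a ∈ Finset.Icc a b := Finset.mem_Icc.2 ⟨le_rfl, hab⟩
  have hb : b ∈ Finset.Icc a b := Finset.mem_Icc.2 ⟨hab, le_rfl⟩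
  have h1 := key b hab le_rfl
  have h2 := norm_halfCot_le hθ (hlo a ha) (hhi a ha)
  have h3 := norm_halfCot_le hθ (hlo b hb) (hhi b hb)
  have h4 := abs_le.1 (abs_cot_le hθ (hlo a ha) (hhi a ha))
  have h5 := abs_le.1 (abs_cot_le hθ (hlo b hb) (hhi b hb))
  have h6 : (1 : ℝ) ≤ 1 / (2 * θ) := by
    rw [le_div_iff₀ (by linarith)]; linarith [hlo a ha, hhi a ha]
  have heq : ∑ n ∈ Finset.Icc a b, expChar (g n) =
      (∑ n ∈ Finset.Ico a b, expChar (g n) + halfCot (g (b + 1) - g b) * expChar (g b)) +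
      expChar (g b) - halfCot (g (b + 1) - g b) * expChar (g b) := by
    rw [← Finset.Ico_insert_right hab, Finset.sum_insert (by simp)]
    ring
  rw [heq]
  refine (norm_sub_le _ _).trans ?_
  have h7 := norm_add_le (∑ n ∈ Finset.Ico a b, expChar (g n) +
    halfCot (g (b + 1) - g b) * expChar (g b)) (expChar (g b))
  rw [norm_mul, norm_expChar, mul_one]
  rw [norm_expChar] at h7
  have h8 : 5 / (2 * θ) = 5 * (1 / (2 * θ)) := by ring
  linarith

/-- The Kusmin–Landau inequality over an order-convex set of indices. -/
lemma norm_sum_expChar_le (g : ℕ → ℝ) (s : Finset ℕ)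
    (hconv : ∀ m ∈ s, ∀ n ∈ s, ∀ l, m ≤ l → l ≤ n → l ∈ s) {θ : ℝ} (hθ : 0 < θ) (k : ℤ)
    (hlo : ∀ n ∈ s, k + θ ≤ g (n + 1) - g n)
    (hhi : ∀ n ∈ s, g (n + 1) - g n ≤ k + 1 - θ)
    (hanti : ∀ n ∈ s, n + 1 ∈ s → g (n + 2) - g (n + 1) ≤ g (n + 1) - g n) :
    ‖∑ n ∈ s, expChar (g n)‖ ≤ 5 / (2 * θ) := by
  rcases s.eq_empty_or_nonempty with rfl | hs
  · simp; positivity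
  have hIcc : s = Finset.Icc (s.min' hs) (s.max' hs) := by
    ext l
    rw [Finset.mem_Icc]
    exact ⟨fun h => ⟨s.min'_le l h, s.le_max' l h⟩,
      fun h => hconv _ (s.min'_mem hs) _ (s.max'_mem hs) l h.1 h.2⟩
  have hab : s.min' hs ≤ s.max' hs := s.min'_le _ (s.max'_mem hs)
  generalize s.min' hs = a at hIcc hab
  generalize s.max' hs = b at hIcc hab
  subst hIcc
  have hshift : ∀ n : ℕ, expChar (g n) = expChar (g n - k * n) := fun n => by
    have h : g n = (g n - k * n) + ((k * n : ℤ) : ℝ) := by push_cast; ring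
    conv_lhs => rw [h, expChar_add, expChar_intCast, mul_one]
  rw [Finset.sum_congr rfl fun n _ => hshift n]
  refine norm_sum_expChar_le_of_mem_unit (fun n => g n - k * n) hab hθ ?_ ?_ ?_
  · intro n hn
    have := hlo n hn
    push_cast
    linarith
  · intro n hn
    have := hhi n hn
    push_cast
    linarith
  · intro n h1 h2
    have := hanti n (Finset.mem_Icc.2 ⟨h1, by omega⟩) (Finset.mem_Icc.2 ⟨by omega, by omega⟩)
    push_cast
    linarith

lemma card_le_of_separated (d : ℕ → ℝ) (s : Finset ℕ) {μ θ : ℝ} (hμ : 0 < μ) (hθ : 0 ≤ θ)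
    (hsep : ∀ m ∈ s, ∀ n ∈ s, m ≤ n → μ * ((n : ℝ) - m) ≤ d m - d n)
    (hrange : ∀ m ∈ s, ∀ n ∈ s, d m - d n ≤ θ) : (s.card : ℝ) ≤ θ / μ + 1 := by
  rcases s.eq_empty_or_nonempty with rfl | hs
  · simp; positivity
  have hsub : s ⊆ Finset.Icc (s.min' hs) (s.max' hs) := fun l h =>
    Finset.mem_Icc.2 ⟨s.min'_le l h, s.le_max' l h⟩
  have hab : s.min' hs ≤ s.max' hs := s.min'_le _ (s.max'_mem hs)
  have h1 := hsep _ (s.min'_mem hs) _ (s.max'_mem hs) hab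
  have h2 := hrange _ (s.min'_mem hs) _ (s.max'_mem hs)
  have h3 := Finset.card_le_card hsub
  rw [Nat.card_Icc] at h3
  have h4 : (s.card : ℝ) ≤ (s.max' hs : ℝ) + 1 - s.min' hs := by
    rw [le_sub_iff_add_le]
    exact_mod_cast (by omega : s.card + s.min' hs ≤ s.max' hs + 1)
  have h5 : (s.max' hs : ℝ) - s.min' hs ≤ θ / μ := by
    rw [le_div_iff₀ hμ]; linarith
  linarith

/-- A discrete van der Corput second derivative test. -/
lemma norm_sum_expChar_le_of_separated (g : ℕ → ℝ) (a b : ℕ) {μ D : ℝ} (hμ : 0 < μ)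
    (hμ1 : μ ≤ 1 / 4)
    (hsep : ∀ m n, a ≤ m → m ≤ n → n < b →
      μ * ((n : ℝ) - m) ≤ (g (m + 1) - g m) - (g (n + 1) - g n))
    (h0 : ∀ n, a ≤ n → n < b → 0 ≤ g (n + 1) - g n)
    (hD : ∀ n, a ≤ n → n < b → g (n + 1) - g n ≤ D) (hD0 : 0 ≤ D) :
    ‖∑ n ∈ Finset.Ico a b, expChar (g n)‖ ≤ (D + 1) * (6 / √μ) := by
  set d : ℕ → ℝ := fun n => g (n + 1) - g n with hd
  have hθ : 0 < √μ := Real.sqrt_pos.2 hμ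
  have hθ1 : √μ ≤ 1 / 2 := by
    rw [Real.sqrt_le_left (by norm_num)]; norm_num; linarith
  have hanti : ∀ m n, a ≤ m → m ≤ n → n < b → d n ≤ d m := fun m n h1 h2 h3 => by
    have h4 := hsep m n h1 h2 h3
    have h5 : (m : ℝ) ≤ n := by exact_mod_cast h2
    have : 0 ≤ μ * ((n : ℝ) - m) := mul_nonneg hμ.le (by linarith)
    simp only [hd]; linarith
  have hfib : ∀ k : ℤ, ‖∑ n ∈ Finset.Ico a b with ⌊d n⌋ = k, expChar (g n)‖ ≤ 6 / √μ := by
    intro k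
    have hsmall : ∀ t : Finset ℕ, t ⊆ Finset.Ico a b →
        (∀ m ∈ t, ∀ n ∈ t, d m - d n ≤ √μ) → ‖∑ n ∈ t, expChar (g n)‖ ≤ 1 / √μ + 1 := by
      intro t ht hr
      have h1 := card_le_of_separated d t hμ hθ.le (fun m hm n hn hmn =>
        hsep m n (Finset.mem_Ico.1 (ht hm)).1 hmn (Finset.mem_Ico.1 (ht hn)).2) hr
      have h2 : √μ / μ = 1 / √μ := by
        rw [div_eq_div_iff hμ.ne' hθ.ne', Real.mul_self_sqrt hμ.le, one_mul]
      rw [h2] at h1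
      refine (norm_sum_le _ _).trans ?_
      simpa [norm_expChar] using h1
    rw [← Finset.sum_filter_add_sum_filter_not _ (fun n => d n < k + √μ)]
    rw [← Finset.sum_filter_add_sum_filter_not (Finset.filter (fun n => ¬ d n < k + √μ) _)
      (fun n => k + 1 - √μ < d n)]
    refine (norm_add_le _ _).trans ((add_le_add_right (norm_add_le _ _) _).trans ?_)
    have hA := hsmall (((Finset.Ico a b).filter fun n => ⌊d n⌋ = k).filter
      fun n => d n < k + √μ) (by intro n; simp +contextual) (by
        intro m hm n hn
        simp only [Finset.mem_filter] at hm hn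
        have := (Int.floor_eq_iff.1 hn.1.2).1
        linarith)
    have hB := hsmall ((((Finset.Ico a b).filter fun n => ⌊d n⌋ = k).filter
      fun n => ¬ d n < k + √μ).filter fun n => k + 1 - √μ < d n)
      (by intro n; simp +contextual) (by
        intro m hm n hn
        simp only [Finset.mem_filter] at hm hn
        have := (Int.floor_eq_iff.1 hm.1.1.2).2
        linarith)
    have hC := norm_sum_expChar_le g ((((Finset.Ico a b).filter fun n => ⌊d n⌋ = k).filter
      fun n => ¬ d n < k + √μ).filter fun n => ¬ k + 1 - √μ < d n) (by
        intro m hm n hn l hml hln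
        simp only [Finset.mem_filter, Finset.mem_Ico, not_lt, Int.floor_eq_iff] at hm hn ⊢
        have h1 := hanti m l hm.1.1.1.1 hml (by omega)
        have h2 := hanti l n (by omega) hln (by omega)
        refine ⟨⟨⟨⟨by omega, by omega⟩, ?_, ?_⟩, ?_⟩, ?_⟩ <;> linarith) hθ k (by
        intro n hn
        simp only [Finset.mem_filter, not_lt] at hn
        exact hn.1.2) (by
        intro n hn
        simp only [Finset.mem_filter, not_lt] at hn
        exact hn.2) (by
        intro n hn hn'
        simp only [Finset.mem_filter, Finset.mem_Ico] at hn hn'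
        exact hanti n (n + 1) (by omega) (by omega) (by omega))
    have h6 : (2 : ℝ) ≤ 1 / √μ := by rw [le_div_iff₀ hθ]; linarith
    have h7 : 5 / (2 * √μ) = 5 / 2 * (1 / √μ) := by field_simp
    have h8 : 6 / √μ = 6 * (1 / √μ) := by ring
    linarith
  rw [← Finset.sum_fiberwise_of_maps_to (s := Finset.Ico a b) (t := Finset.Icc 0 ⌊D⌋)
    (g := fun n => ⌊d n⌋)]
  · refine (norm_sum_le _ _).trans ((Finset.sum_le_sum fun k _ => hfib k).trans ?_)
    rw [Finset.sum_const, nsmul_eq_mul, Int.card_Icc]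
    refine mul_le_mul_of_nonneg_right ?_ (by positivity)
    have h9 : 0 ≤ ⌊D⌋ := Int.floor_nonneg.2 hD0
    have h10 : (((⌊D⌋ + 1 - 0).toNat : ℕ) : ℝ) = ⌊D⌋ + 1 := by
      have : (((⌊D⌋ + 1 - 0).toNat : ℕ) : ℤ) = ⌊D⌋ + 1 := by omega
      exact_mod_cast this
    rw [h10]
    linarith [Int.floor_le D]
  · intro n hn
    rw [Finset.mem_Ico] at hn
    exact Finset.mem_Icc.2 ⟨Int.floor_nonneg.2 (h0 n hn.1 hn.2),
      Int.floor_le_floor (hD n hn.1 hn.2)⟩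

lemma hasSum_cos_div_sq (u : ℝ) :
    HasSum (fun h : ℕ => 1 / (h : ℝ) ^ 2 * Real.cos (2 * Real.pi * (h * u)))
      (Real.pi ^ 2 * (Int.fract u ^ 2 - Int.fract u + 1 / 6)) := by
  have h := hasSum_one_div_nat_pow_mul_cos one_ne_zero
    (x := Int.fract u) ⟨Int.fract_nonneg u, (Int.fract_lt_one u).le⟩
  have hB : (Polynomial.map (algebraMap ℚ ℝ) (Polynomial.bernoulli 2)).eval (Int.fract u) =
      Int.fract u ^ 2 - Int.fract u + 1 / 6 := by
    simp [Polynomial.bernoulli_def, Finset.sum_range_succ, bernoulli_one]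
    norm_num [bernoulli_two]
    ring
  convert h using 1
  · funext n
    rw [mul_one]
    congr 1
    have : 2 * Real.pi * (n * u) = 2 * Real.pi * n * Int.fract u +
        ((n * ⌊u⌋ : ℤ) : ℝ) * (2 * Real.pi) := by
      push_cast
      rw [Int.fract]
      ring
    rw [this, Real.cos_add_int_mul_two_pi]
  · rw [mul_one, hB, Nat.factorial_two]
    push_cast
    ring

lemma fract_sub_half_le (u : ℝ) {δ : ℝ} (hδ : 0 < δ) (hδ1 : δ ≤ 1) :
    2 * δ * (Int.fract u - 1 / 2) ≤ (Int.fract u ^ 2 - Int.fract u) -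
      (Int.fract (u + -δ) ^ 2 - Int.fract (u + -δ)) + δ ^ 2 := by
  have h0 := Int.fract_nonneg u
  have h1 := Int.fract_lt_one u
  have hu := Int.floor_add_fract u
  rcases le_or_gt δ (Int.fract u) with h | h
  · have : Int.fract (u + -δ) = Int.fract u - δ := by
      rw [Int.fract_eq_iff]
      exact ⟨by linarith, by linarith, ⌊u⌋, by linarith⟩
    rw [this]; nlinarith
  · have : Int.fract (u + -δ) = Int.fract u - δ + 1 := by
      rw [Int.fract_eq_iff]
      exact ⟨by linarith, by linarith, ⌊u⌋ - 1, by push_cast; linarith⟩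
    rw [this]; nlinarith

lemma le_fract_sub_half (u : ℝ) {δ : ℝ} (hδ : 0 < δ) (hδ1 : δ ≤ 1) :
    (Int.fract (u + δ) ^ 2 - Int.fract (u + δ)) - (Int.fract u ^ 2 - Int.fract u) - δ ^ 2 ≤
      2 * δ * (Int.fract u - 1 / 2) := by
  have h0 := Int.fract_nonneg u
  have h1 := Int.fract_lt_one u
  have hu := Int.floor_add_fract u
  rcases lt_or_ge (Int.fract u + δ) 1 with h | h
  · have : Int.fract (u + δ) = Int.fract u + δ := by
      rw [Int.fract_eq_iff]
      exact ⟨by linarith, by linarith, ⌊u⌋, by linarith⟩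
    rw [this]; nlinarith
  · have : Int.fract (u + δ) = Int.fract u + δ - 1 := by
      rw [Int.fract_eq_iff]
      exact ⟨by linarith, by linarith, ⌊u⌋ + 1, by push_cast; linarith⟩
    rw [this]; nlinarith

lemma norm_expChar_sub_one_le (t : ℝ) : ‖expChar t - 1‖ ≤ 2 * Real.pi * |t| := by
  have h := Real.norm_exp_I_mul_ofReal_sub_one_le (x := 2 * Real.pi * t)
  rw [mul_comm Complex.I] at h
  refine h.trans (le_of_eq ?_)
  rw [Real.norm_eq_abs, abs_mul, abs_of_pos Real.two_pi_pos]

lemma abs_sum_cos_sub_le (s : Finset ℕ) (u : ℕ → ℝ) (η h : ℝ) :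
    |∑ n ∈ s, (Real.cos (2 * Real.pi * (h * (u n + η))) - Real.cos (2 * Real.pi * (h * u n)))| ≤
      min 2 (2 * Real.pi * |h * η|) * ‖∑ n ∈ s, expChar (h * u n)‖ := by
  have heq : ∑ n ∈ s, (Real.cos (2 * Real.pi * (h * (u n + η))) -
      Real.cos (2 * Real.pi * (h * u n))) =
      ((expChar (h * η) - 1) * ∑ n ∈ s, expChar (h * u n)).re := by
    rw [Finset.mul_sum, Complex.re_sum]
    refine Finset.sum_congr rfl fun n _ => ?_
    rw [sub_mul, one_mul, ← expChar_add, Complex.sub_re, expChar_re, expChar_re]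
    congr 3
    ring
  rw [heq]
  refine (Complex.abs_re_le_norm _).trans ?_
  rw [norm_mul]
  refine mul_le_mul_of_nonneg_right (le_min ?_ (norm_expChar_sub_one_le _)) (norm_nonneg _)
  refine (norm_sub_le _ _).trans ?_
  rw [norm_expChar, norm_one]
  norm_num

/-- Telescoping bound for the Fourier weights of the smoothed sawtooth. -/
lemma min_mul_sqrt_le {δ : ℝ} (hδ : 0 < δ) (h : ℕ) :
    min (1 / ((h : ℝ) + 1)) (1 / (δ * ((h : ℝ) + 1) ^ 2)) * √((h : ℝ) + 1) ≤
      8 * (√((h : ℝ) + 1) / (1 + √δ * √((h : ℝ) + 1)) - √(h : ℝ) / (1 + √δ * √(h : ℝ))) := by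
  set b := √((h : ℝ) + 1) with hb
  set c := √(h : ℝ) with hc
  set d := √δ with hd
  have hb2 : (h : ℝ) + 1 = b ^ 2 := (Real.sq_sqrt (by positivity)).symm
  have hc2 : (h : ℝ) = c ^ 2 := (Real.sq_sqrt (by positivity)).symm
  have hd2 : δ = d ^ 2 := (Real.sq_sqrt hδ.le).symm
  have hb0 : 0 < b := Real.sqrt_pos.2 (by positivity)
  have hc0 : 0 ≤ c := Real.sqrt_nonneg _
  have hd0 : 0 < d := Real.sqrt_pos.2 hδ
  have hcb : c ≤ b := Real.sqrt_le_sqrt (by linarith)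
  have hbc : 1 ≤ (b - c) * (2 * b) := by nlinarith
  rw [hb2, hd2]
  have hG : b / (1 + d * b) - c / (1 + d * c) = (b - c) / ((1 + d * b) * (1 + d * c)) := by
    field_simp
    ring
  have h1 : 1 / (2 * b * (1 + d * b) ^ 2) ≤ b / (1 + d * b) - c / (1 + d * c) := by
    rw [hG, div_le_div_iff₀ (by positivity) (by positivity)]
    have h2 : (1 + d * b) * (1 + d * c) ≤ (1 + d * b) ^ 2 := by
      rw [sq]; gcongr
    calc 1 * ((1 + d * b) * (1 + d * c)) ≤ 1 * (1 + d * b) ^ 2 := by linarith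
      _ ≤ ((b - c) * (2 * b)) * (1 + d * b) ^ 2 := by gcongr
      _ = _ := by ring
  refine le_trans ?_ (mul_le_mul_of_nonneg_left h1 (by norm_num))
  rcases le_total (d * b) 1 with h3 | h3
  · refine (mul_le_mul_of_nonneg_right (min_le_left _ _) hb0.le).trans ?_
    have h4 : (1 + d * b) ^ 2 ≤ 4 := by nlinarith [mul_pos hd0 hb0]
    rw [mul_one_div, div_mul_eq_mul_div, div_le_div_iff₀ (by positivity) (by positivity)]
    nlinarith [mul_le_mul_of_nonneg_left h4 (sq_nonneg b)]
  · refine (mul_le_mul_of_nonneg_right (min_le_right _ _) hb0.le).trans ?_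
    have h4 : (1 + d * b) ^ 2 ≤ 4 * (d * b) ^ 2 := by nlinarith
    rw [mul_one_div, div_mul_eq_mul_div, div_le_div_iff₀ (by positivity) (by positivity)]
    nlinarith [mul_le_mul_of_nonneg_left h4 (sq_nonneg b)]

lemma abs_sum_fract_shift_le (s : Finset ℕ) (u : ℕ → ℝ) {δ K₁ K₂ : ℝ} (hδ : 0 < δ)
    (hK₁ : 0 ≤ K₁) (hK₂ : 0 ≤ K₂)
    (hS : ∀ h : ℕ, 1 ≤ h → ‖∑ n ∈ s, expChar (h * u n)‖ ≤ K₁ * √h + K₂ / h)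
    {η : ℝ} (hη : |η| = δ) :
    |∑ n ∈ s, ((Int.fract (u n + η) ^ 2 - Int.fract (u n + η)) -
      (Int.fract (u n) ^ 2 - Int.fract (u n)))| ≤ 2 * δ * (8 * K₁ / √δ + 2 * K₂) := by
  have hπ := Real.pi_gt_three
  have hd : 0 < √δ := Real.sqrt_pos.2 hδ
  set T : ℕ → ℝ := fun h => ∑ n ∈ s, (1 / (h : ℝ) ^ 2 * Real.cos (2 * Real.pi * (h * (u n + η))) -
    1 / (h : ℝ) ^ 2 * Real.cos (2 * Real.pi * (h * u n))) with hT
  have hsum : HasSum T (∑ n ∈ s, (Real.pi ^ 2 * (Int.fract (u n + η) ^ 2 -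
      Int.fract (u n + η) + 1 / 6) - Real.pi ^ 2 * (Int.fract (u n) ^ 2 -
      Int.fract (u n) + 1 / 6))) :=
    hasSum_sum fun n _ => (hasSum_cos_div_sq _).sub (hasSum_cos_div_sq _)
  have hterm : ∀ h : ℕ, |T (h + 1)| ≤ 2 * Real.pi * δ * (8 * K₁ *
      (√((h : ℝ) + 1) / (1 + √δ * √((h : ℝ) + 1)) - √(h : ℝ) / (1 + √δ * √(h : ℝ))) +
      K₂ * (2 / ((h : ℝ) + 1) - 2 / ((h : ℝ) + 2))) := by
    intro h
    have hh : (0 : ℝ) < (h : ℝ) + 1 := by positivity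
    have h1 := abs_sum_cos_sub_le s u η ((h : ℝ) + 1)
    have h2 := hS (h + 1) (by omega)
    push_cast at h2
    have h3 : T (h + 1) = 1 / ((h : ℝ) + 1) ^ 2 * ∑ n ∈ s,
        (Real.cos (2 * Real.pi * (((h : ℝ) + 1) * (u n + η))) -
          Real.cos (2 * Real.pi * (((h : ℝ) + 1) * u n))) := by
      simp only [hT, Finset.mul_sum, mul_sub]
      push_cast
      rfl
    rw [h3, abs_mul, abs_of_pos (by positivity : 0 < 1 / ((h : ℝ) + 1) ^ 2)]
    rw [abs_mul, hη, abs_of_pos hh] at h1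
    set m := min (1 / ((h : ℝ) + 1)) (1 / (δ * ((h : ℝ) + 1) ^ 2)) with hm
    have hm0 : 0 ≤ m := le_min (by positivity) (by positivity)
    have h4 : 1 / ((h : ℝ) + 1) ^ 2 * min 2 (2 * Real.pi * (((h : ℝ) + 1) * δ)) ≤
        2 * Real.pi * δ * m := by
      rw [hm, mul_min_of_nonneg _ _ (by positivity), mul_min_of_nonneg _ _ (by positivity)]
      rw [min_comm]
      apply min_le_min
      · apply le_of_eq; field_simp
      · have : 2 * Real.pi * δ * (1 / (δ * ((h : ℝ) + 1) ^ 2)) =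
          1 / ((h : ℝ) + 1) ^ 2 * (2 * Real.pi) := by field_simp
        rw [this]
        gcongr
        linarith
    have h5 := min_mul_sqrt_le hδ h
    rw [← hm] at h5
    have h6 : m * (1 / ((h : ℝ) + 1)) ≤ 2 / ((h : ℝ) + 1) - 2 / ((h : ℝ) + 2) := by
      have h7 : m * (1 / ((h : ℝ) + 1)) ≤ 1 / ((h : ℝ) + 1) * (1 / ((h : ℝ) + 1)) := by
        gcongr; exact min_le_left _ _
      refine h7.trans ?_
      rw [div_sub_div _ _ (by positivity) (by positivity), div_mul_div_comm,
        div_le_div_iff₀ (by positivity) (by positivity)]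
      nlinarith
    calc 1 / ((h : ℝ) + 1) ^ 2 * |∑ n ∈ s,
        (Real.cos (2 * Real.pi * (((h : ℝ) + 1) * (u n + η))) -
          Real.cos (2 * Real.pi * (((h : ℝ) + 1) * u n)))|
        ≤ 1 / ((h : ℝ) + 1) ^ 2 * (min 2 (2 * Real.pi * (((h : ℝ) + 1) * δ)) *
          (K₁ * √((h : ℝ) + 1) + K₂ / ((h : ℝ) + 1))) := by
          gcongr
          refine h1.trans ?_
          gcongr
      _ = (1 / ((h : ℝ) + 1) ^ 2 * min 2 (2 * Real.pi * (((h : ℝ) + 1) * δ))) *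
          (K₁ * √((h : ℝ) + 1) + K₂ / ((h : ℝ) + 1)) := by ring
      _ ≤ (2 * Real.pi * δ * m) * (K₁ * √((h : ℝ) + 1) + K₂ / ((h : ℝ) + 1)) := by gcongr
      _ = 2 * Real.pi * δ * (K₁ * (m * √((h : ℝ) + 1)) + K₂ * (m * (1 / ((h : ℝ) + 1)))) := by
          ring
      _ ≤ 2 * Real.pi * δ * (K₁ * (8 * (√((h : ℝ) + 1) / (1 + √δ * √((h : ℝ) + 1)) -
          √(h : ℝ) / (1 + √δ * √(h : ℝ)))) +
          K₂ * (2 / ((h : ℝ) + 1) - 2 / ((h : ℝ) + 2))) := by gcongr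
      _ = _ := by ring
  have hpart : ∀ H : ℕ, |∑ h ∈ Finset.range (H + 1), T h| ≤ 2 * Real.pi * δ * (8 * K₁ *
      (√(H : ℝ) / (1 + √δ * √(H : ℝ))) + K₂ * (2 - 2 / ((H : ℝ) + 1))) := by
    intro H
    induction H with
    | zero => simp [hT]
    | succ H ih =>
      rw [Finset.sum_range_succ]
      refine (abs_add_le _ _).trans ((add_le_add ih (hterm H)).trans (le_of_eq ?_))
      push_cast
      ring
  have hbound : ∀ H : ℕ, |∑ h ∈ Finset.range (H + 1), T h| ≤
      2 * Real.pi * δ * (8 * K₁ / √δ + 2 * K₂) := by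
    intro H
    refine (hpart H).trans ?_
    have h1 : √(H : ℝ) / (1 + √δ * √(H : ℝ)) ≤ 1 / √δ := by
      rw [div_le_div_iff₀ (by positivity) hd]
      nlinarith [Real.sqrt_nonneg (H : ℝ)]
    have h2 : 2 - 2 / ((H : ℝ) + 1) ≤ 2 := by
      have : 0 ≤ 2 / ((H : ℝ) + 1) := by positivity
      linarith
    calc _ ≤ 2 * Real.pi * δ * (8 * K₁ * (1 / √δ) + K₂ * 2) := by gcongr
      _ = _ := by ring
  have hlim := ((Filter.tendsto_add_atTop_iff_nat 1).2 hsum.tendsto_sum_nat).abs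
  have hfin := le_of_tendsto' hlim hbound
  have heq : ∑ n ∈ s, (Real.pi ^ 2 * (Int.fract (u n + η) ^ 2 -
      Int.fract (u n + η) + 1 / 6) - Real.pi ^ 2 * (Int.fract (u n) ^ 2 -
      Int.fract (u n) + 1 / 6)) = Real.pi ^ 2 * ∑ n ∈ s, ((Int.fract (u n + η) ^ 2 -
      Int.fract (u n + η)) - (Int.fract (u n) ^ 2 - Int.fract (u n))) := by
    rw [Finset.mul_sum]
    exact Finset.sum_congr rfl fun n _ => by ring
  rw [heq, abs_mul, abs_of_pos (by positivity : 0 < Real.pi ^ 2)] at hfin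
  set X := |∑ n ∈ s, ((Int.fract (u n + η) ^ 2 - Int.fract (u n + η)) -
      (Int.fract (u n) ^ 2 - Int.fract (u n)))|
  have hY : 0 ≤ 2 * δ * (8 * K₁ / √δ + 2 * K₂) := by positivity
  have h8 : Real.pi * (Real.pi * X) ≤ Real.pi * (2 * δ * (8 * K₁ / √δ + 2 * K₂)) := by
    linarith
  have h9 := le_of_mul_le_mul_left h8 (by linarith)
  have hX : 0 ≤ X := abs_nonneg _
  nlinarith

/-- Bounding a sawtooth sum by exponential sums. -/
lemma abs_sum_fract_sub_half_le (s : Finset ℕ) (u : ℕ → ℝ) {δ K₁ K₂ : ℝ} (hδ : 0 < δ)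
    (hδ1 : δ ≤ 1) (hK₁ : 0 ≤ K₁) (hK₂ : 0 ≤ K₂)
    (hS : ∀ h : ℕ, 1 ≤ h → ‖∑ n ∈ s, expChar (h * u n)‖ ≤ K₁ * √h + K₂ / h) :
    |∑ n ∈ s, (Int.fract (u n) - 1 / 2)| ≤ δ * s.card + 8 * K₁ / √δ + 2 * K₂ := by
  have h1 := abs_le.1 (abs_sum_fract_shift_le s u hδ hK₁ hK₂ hS (abs_of_pos hδ))
  have h2 := abs_le.1 (abs_sum_fract_shift_le s u hδ hK₁ hK₂ hS
    (by rw [abs_neg, abs_of_pos hδ] : |-δ| = δ))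
  have h3 := Finset.sum_le_sum fun n (_ : n ∈ s) => fract_sub_half_le (u n) hδ hδ1
  have h4 := Finset.sum_le_sum fun n (_ : n ∈ s) => le_fract_sub_half (u n) hδ hδ1
  simp only [Finset.sum_add_distrib, Finset.sum_sub_distrib, ← Finset.mul_sum, Finset.sum_const,
    nsmul_eq_mul] at h1 h2 h3 h4 ⊢
  have hc : (0 : ℝ) ≤ s.card := by positivity
  have h5 : 0 ≤ δ * δ * s.card := by positivity
  rw [abs_le]
  constructor
  · refine le_of_mul_le_mul_left ?_ (by positivity : 0 < 2 * δ)
    nlinarith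
  · refine le_of_mul_le_mul_left ?_ (by positivity : 0 < 2 * δ)
    nlinarith

lemma norm_sum_expChar_neg (s : Finset ℕ) (f : ℕ → ℝ) :
    ‖∑ n ∈ s, expChar (-f n)‖ = ‖∑ n ∈ s, expChar (f n)‖ := by
  rw [← Complex.norm_conj, map_sum]
  congr 1
  refine Finset.sum_congr rfl fun n _ => ?_
  apply Complex.ext
  · rw [Complex.conj_re, expChar_re, expChar_re, mul_neg, Real.cos_neg]
  · rw [Complex.conj_im, expChar_im, expChar_im, mul_neg, Real.sin_neg, neg_neg]

lemma norm_sum_expChar_div_le {z : ℝ} (hz : 0 < z) {N N' : ℕ} (hN : 1 ≤ N) (hN' : N' ≤ 2 * N) :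
    ‖∑ n ∈ Finset.Ico N N', expChar (z / n)‖ ≤ 36 * √(z / N) + 15 * (N : ℝ) ^ 2 / z := by
  rw [← norm_sum_expChar_neg]
  have hN0 : (1 : ℝ) ≤ N := by exact_mod_cast hN
  have hinc : ∀ n : ℕ, N ≤ n → -(z / ((n + 1 : ℕ) : ℝ)) - -(z / (n : ℝ)) =
      z / ((n : ℝ) * (n + 1)) := by
    intro n hn
    have : (1 : ℝ) ≤ n := hN0.trans (by exact_mod_cast hn)
    push_cast
    field_simp
    ring
  have hup : ∀ n : ℕ, N ≤ n → z / ((n : ℝ) * (n + 1)) ≤ z / (N : ℝ) ^ 2 := by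
    intro n hn
    have : (N : ℝ) ≤ n := by exact_mod_cast hn
    gcongr
    nlinarith
  have hle : ∀ n : ℕ, n < N' → (n : ℝ) + 1 ≤ 2 * N := fun n hn => by
    exact_mod_cast (by omega : n + 1 ≤ 2 * N)
  have hsep : ∀ m n : ℕ, N ≤ m → m ≤ n → n < N' → z / (4 * (N : ℝ) ^ 3) * ((n : ℝ) - m) ≤
      z / ((m : ℝ) * (m + 1)) - z / ((n : ℝ) * (n + 1)) := by
    intro m n h1 h2 h3
    have h4 : (N : ℝ) ≤ m := by exact_mod_cast h1
    have h5 : (m : ℝ) ≤ n := by exact_mod_cast h2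
    have h6 := hle n h3
    have h7 := hle m (by omega)
    have hm : (0 : ℝ) < m := by linarith
    have hn : (0 : ℝ) < n := by linarith
    have heq : z / ((m : ℝ) * (m + 1)) - z / ((n : ℝ) * (n + 1)) =
        z * ((n : ℝ) - m) * ((1 / m + 1 / n) * (1 / (((m : ℝ) + 1) * (n + 1))) +
          1 / (m * n * (m + 1) * (n + 1))) := by
      field_simp
      ring
    have h8 : 1 / (N : ℝ) ≤ 1 / m + 1 / n := by
      have : 1 / (2 * N : ℝ) ≤ 1 / m := one_div_le_one_div_of_le hm (by linarith)
      have : 1 / (2 * N : ℝ) ≤ 1 / n := one_div_le_one_div_of_le hn (by linarith)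
      have : 1 / (N : ℝ) = 1 / (2 * N : ℝ) + 1 / (2 * N : ℝ) := by field_simp; norm_num
      linarith
    have h9 : 1 / (2 * N * (2 * N) : ℝ) ≤ 1 / (((m : ℝ) + 1) * (n + 1)) := by
      apply one_div_le_one_div_of_le (by positivity)
      gcongr
    have h10 : 0 ≤ 1 / ((m : ℝ) * n * (m + 1) * (n + 1)) := by positivity
    have h11 : 0 ≤ z * ((n : ℝ) - m) := mul_nonneg hz.le (by linarith)
    rw [heq]
    calc z / (4 * (N : ℝ) ^ 3) * ((n : ℝ) - m)
        = z * ((n : ℝ) - m) * (1 / N * (1 / (2 * N * (2 * N)))) := by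
          field_simp
          ring
      _ ≤ z * ((n : ℝ) - m) * ((1 / m + 1 / n) * (1 / (((m : ℝ) + 1) * (n + 1)))) := by
        gcongr
      _ ≤ _ := by gcongr; linarith
  have hq0 : 0 ≤ 15 * (N : ℝ) ^ 2 / z := by positivity
  have hw0 : 0 < √(z / N) := Real.sqrt_pos.2 (by positivity)
  have hw : √(z / N) ^ 2 = z / N := Real.sq_sqrt (by positivity)
  rcases le_or_gt (z / (N : ℝ) ^ 2) (1 / 2) with hcase | hcase
  · have h := norm_sum_expChar_le (fun n : ℕ => -(z / (n : ℝ))) (Finset.Ico N N')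
      (by
        intro m hm n hn l h1 h2
        rw [Finset.mem_Ico] at *
        omega) (θ := z / (6 * (N : ℝ) ^ 2)) (by positivity) 0 (by
        intro n hn
        rw [Finset.mem_Ico] at hn
        rw [hinc n hn.1, Int.cast_zero, zero_add]
        have h1 := hle n hn.2
        have h2 : (N : ℝ) ≤ n := by exact_mod_cast hn.1
        have h3 : (n : ℝ) * (n + 1) ≤ 6 * (N : ℝ) ^ 2 := by nlinarith
        have h4 : (0 : ℝ) < n := by linarith
        gcongr) (by
        intro n hn
        rw [Finset.mem_Ico] at hn
        rw [hinc n hn.1, Int.cast_zero, zero_add]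
        have h1 := hup n hn.1
        have h2 : z / (6 * (N : ℝ) ^ 2) = z / (N : ℝ) ^ 2 / 6 := by field_simp
        linarith) (by
        intro n hn hn'
        rw [Finset.mem_Ico] at hn hn'
        have h1 := hinc (n + 1) (by omega)
        rw [hinc n hn.1]
        rw [show n + 2 = n + 1 + 1 from rfl, h1]
        have h2 : (1 : ℝ) ≤ n := hN0.trans (by exact_mod_cast hn.1)
        push_cast
        gcongr <;> linarith)
    have heq : 5 / (2 * (z / (6 * (N : ℝ) ^ 2))) = 15 * (N : ℝ) ^ 2 / z := by
      field_simp; norm_num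
    rw [heq] at h
    linarith
  · rcases le_or_gt ((N : ℝ) ^ 3) z with hbig | hbig
    · have h1 : (N : ℝ) ≤ √(z / N) := by
        apply Real.le_sqrt_of_sq_le
        rw [le_div_iff₀ (by positivity)]
        linarith [pow_succ (N : ℝ) 2]
      have h2 : ‖∑ n ∈ Finset.Ico N N', expChar (-(z / (n : ℝ)))‖ ≤ N := by
        refine (norm_sum_le _ _).trans ?_
        simp only [norm_expChar, Finset.sum_const, Nat.card_Ico, nsmul_eq_mul, mul_one]
        exact_mod_cast (by omega : N' - N ≤ N)
      linarith
    · have h := norm_sum_expChar_le_of_separated (fun n : ℕ => -(z / (n : ℝ))) N N'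
        (μ := z / (4 * (N : ℝ) ^ 3)) (D := z / (N : ℝ) ^ 2) (by positivity) (by
          rw [div_le_div_iff₀ (by positivity) (by norm_num)]
          linarith) (by
          intro m n h1 h2 h3
          rw [hinc m h1, hinc n (by omega)]
          exact hsep m n h1 h2 h3) (by
          intro n h1 h2
          rw [hinc n h1]
          positivity) (by
          intro n h1 h2
          rw [hinc n h1]
          exact hup n h1) (by positivity)
      have hμ : √(z / (4 * (N : ℝ) ^ 3)) = √(z / N) / (2 * N) := by
        rw [Real.sqrt_eq_iff_eq_sq (by positivity) (by positivity), div_pow, hw]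
        field_simp
        norm_num
      have hD : z / (N : ℝ) ^ 2 = √(z / N) ^ 2 / N := by rw [hw]; field_simp
      rw [hμ] at h
      have h3 : z / (N : ℝ) ^ 2 + 1 ≤ 3 * (√(z / N) ^ 2 / N) := by rw [← hD]; linarith
      have h4 : (z / (N : ℝ) ^ 2 + 1) * (6 / (√(z / N) / (2 * N))) ≤
          3 * (√(z / N) ^ 2 / N) * (6 / (√(z / N) / (2 * N))) := by gcongr
      have h5 : 3 * (√(z / N) ^ 2 / N) * (6 / (√(z / N) / (2 * N))) = 36 * √(z / N) := by
        field_simp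
        norm_num
      linarith

lemma abs_fract_sub_half_le (t : ℝ) : |Int.fract t - 1 / 2| ≤ 1 / 2 := by
  rw [abs_le]
  constructor <;> linarith [Int.fract_nonneg t, Int.fract_lt_one t]

lemma abs_sum_fract_div_dyadic_le {R : ℝ} (hR : 0 < R) (c : ℝ) {N N' : ℕ} (hN : 1 ≤ N)
    (hN' : N' ≤ 2 * N) :
    |∑ n ∈ Finset.Ico N N', (Int.fract (R ^ 3 / n + c) - 1 / 2)| ≤
      289 * R + 30 * ((N : ℝ) ^ 2 / R ^ 3) := by
  have hN0 : (1 : ℝ) ≤ N := by exact_mod_cast hN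
  have hcard : ((Finset.Ico N N').card : ℝ) ≤ N := by
    rw [Nat.card_Ico]
    exact_mod_cast (by omega : N' - N ≤ N)
  rcases le_or_gt R N with h | h
  · have hS : ∀ h : ℕ, 1 ≤ h → ‖∑ n ∈ Finset.Ico N N', expChar (h * (R ^ 3 / (n : ℝ) + c))‖ ≤
        36 * √(R ^ 3 / N) * √h + (15 * ((N : ℝ) ^ 2 / R ^ 3)) / h := by
      intro h hh
      have hh0 : (0 : ℝ) < h := by exact_mod_cast hh
      have h1 : ∀ n : ℕ, expChar (h * (R ^ 3 / (n : ℝ) + c)) =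
          expChar (h * c) * expChar (h * R ^ 3 / n) := fun n => by
        rw [← expChar_add]; congr 1; ring
      simp only [h1]
      rw [← Finset.mul_sum, norm_mul, norm_expChar, one_mul]
      refine (norm_sum_expChar_div_le (by positivity) hN hN').trans (le_of_eq ?_)
      rw [mul_div_assoc (h : ℝ), Real.sqrt_mul hh0.le]
      field_simp
    have hmain := abs_sum_fract_sub_half_le (Finset.Ico N N') (fun n : ℕ => R ^ 3 / (n : ℝ) + c)
      (δ := R / N) (by positivity) ((div_le_one (by linarith)).2 h) (by positivity)
      (by positivity) hS
    have h2 : R / N * ((Finset.Ico N N').card : ℝ) ≤ R := by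
      calc _ ≤ R / N * N := by gcongr
        _ = R := by field_simp
    have h3 : √(R ^ 3 / N) = R * √(R / N) := by
      rw [show R ^ 3 / N = R ^ 2 * (R / N) by ring, Real.sqrt_mul (by positivity),
        Real.sqrt_sq hR.le]
    have h4 : 8 * (36 * √(R ^ 3 / N)) / √(R / N) = 288 * R := by
      have : 0 < √(R / N) := Real.sqrt_pos.2 (by positivity)
      rw [h3]
      field_simp
      norm_num
    rw [h4] at hmain
    linarith
  · have h1 : |∑ n ∈ Finset.Ico N N', (Int.fract (R ^ 3 / n + c) - 1 / 2)| ≤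
        ∑ n ∈ Finset.Ico N N', (1 / 2 : ℝ) :=
      (Finset.abs_sum_le_sum_abs _ _).trans (Finset.sum_le_sum fun n _ => abs_fract_sub_half_le _)
    rw [Finset.sum_const, nsmul_eq_mul] at h1
    have h2 : 0 ≤ (N : ℝ) ^ 2 / R ^ 3 := by positivity
    linarith

lemma abs_sum_fract_div_le {R : ℝ} (hR : 0 < R) (c : ℝ) (J : ℕ) : ∀ M : ℕ, M ≤ 2 ^ J →
    (∀ n < M, (n : ℝ) ≤ R ^ 2) →
    |∑ n ∈ Finset.Ico 1 M, (Int.fract (R ^ 3 / n + c) - 1 / 2)| ≤ 319 * R * J := by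
  induction J with
  | zero =>
    intro M hM _
    rw [Finset.Ico_eq_empty_of_le (by simpa using hM)]
    simp
  | succ J ih =>
    intro M hM hMR
    push_cast
    rcases le_or_gt M (2 ^ J) with h | h
    · have := ih M h hMR
      nlinarith
    · have h1 : 1 ≤ 2 ^ J := Nat.one_le_two_pow
      have h2 := ih (2 ^ J) le_rfl fun n hn => hMR n (hn.trans h)
      have h3 := abs_sum_fract_div_dyadic_le hR c (N := 2 ^ J) (N' := M) h1
        (by rw [pow_succ] at hM; omega)
      have h4 := hMR _ h
      have h5 : (((2 ^ J : ℕ) : ℝ)) ^ 2 / R ^ 3 ≤ R := by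
        rw [div_le_iff₀ (by positivity)]
        calc (((2 ^ J : ℕ) : ℝ)) ^ 2 ≤ (R ^ 2) ^ 2 := by gcongr
          _ = R * R ^ 3 := by ring
      rw [← Finset.sum_Ico_consecutive _ h1 h.le]
      refine (abs_add_le _ _).trans ?_
      linarith

lemma ite_floor_mod_eq {t : ℝ} (ht : 0 ≤ t) {q : ℕ} (hq : 1 ≤ q) (a : ℕ) :
    (if ⌊t⌋₊ % q = a % q then (1 : ℝ) else 0) =
      1 / q - (Int.fract ((t - a) / q) - 1 / 2) + (Int.fract ((t - a - 1) / q) - 1 / 2) := by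
  have hq0 : (0 : ℝ) < q := by exact_mod_cast hq
  have hqz : (0 : ℤ) < q := by exact_mod_cast hq
  have hfl : ∀ b : ℤ, ⌊(t - b) / q⌋ = ((⌊t⌋₊ : ℤ) - b) / q := fun b => by
    rw [Int.floor_div_natCast, Int.floor_sub_intCast, Int.natCast_floor_eq_floor ht]
  have h1 := hfl a
  have h2 := hfl (a + 1)
  push_cast at h1 h2
  rw [← sub_sub] at h2
  rw [Int.fract, Int.fract, h1, h2]
  have h3 : (⌊t⌋₊ % q = a % q) ↔ ((⌊t⌋₊ : ℤ) - a) % q = 0 := by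
    rw [← Int.natCast_inj]
    push_cast
    exact Int.emod_eq_emod_iff_emod_sub_eq_zero
  have h4 : (if ⌊t⌋₊ % q = a % q then (1 : ℤ) else 0) =
      ((⌊t⌋₊ : ℤ) - a) / q - ((⌊t⌋₊ : ℤ) - (a + 1)) / q := by
    rw [← sub_sub]
    generalize (⌊t⌋₊ : ℤ) - a = w at *
    have h5 := Int.mul_ediv_add_emod w q
    have h6 := Int.emod_nonneg w hqz.ne'
    have h7 := Int.emod_lt_of_pos w hqz
    split_ifs with h
    · rw [h3] at h
      rw [(Int.ediv_eq_iff_of_pos hqz).2 (⟨by linarith, by linarith⟩ :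
        (w / q - 1) * (q : ℤ) ≤ w - 1 ∧ w - 1 < (w / q - 1) * (q : ℤ) + q)]
      ring
    · rw [h3] at h
      have h8 : 1 ≤ w % q := by omega
      rw [(Int.ediv_eq_iff_of_pos hqz).2 (⟨by linarith, by linarith⟩ :
        (w / q) * (q : ℤ) ≤ w - 1 ∧ w - 1 < (w / q) * (q : ℤ) + q)]
      ring
  have h5 : (if ⌊t⌋₊ % q = a % q then (1 : ℝ) else 0) =
      ((if ⌊t⌋₊ % q = a % q then (1 : ℤ) else 0 : ℤ) : ℝ) := by split_ifs <;> simp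
  rw [h5, h4]
  push_cast
  field_simp
  ring

lemma abs_card_filter_mod_sub_le (M : ℕ) {q : ℕ} (hq : 1 ≤ q) (a : ℕ) :
    |(((Finset.Ioc 0 M).filter fun m => m % q = a % q).card : ℝ) - M / q| ≤ 1 := by
  have h := Nat.Ioc_filter_modEq_card 0 M (r := q) hq a
  have hq0 : (0 : ℚ) < q := by exact_mod_cast hq
  have hmono : ⌊(((0 : ℕ) : ℚ) - a) / q⌋ ≤ ⌊((M : ℚ) - a) / q⌋ := by
    apply Int.floor_le_floor
    gcongr
    simp
  rw [max_eq_left (by linarith)] at h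
  have heq : ((Finset.Ioc 0 M).filter fun m => m % q = a % q) =
      (Finset.Ioc 0 M).filter fun m => m ≡ a [MOD q] := rfl
  rw [← heq] at h
  generalize ((Finset.Ioc 0 M).filter fun m => m % q = a % q).card = k at *
  have h1 := Int.floor_le (((M : ℚ) - a) / q)
  have h2 := Int.lt_floor_add_one (((M : ℚ) - a) / q)
  have h3 := Int.floor_le ((((0 : ℕ) : ℚ) - a) / q)
  have h4 := Int.lt_floor_add_one ((((0 : ℕ) : ℚ) - a) / q)
  have h5 : (k : ℚ) = ⌊((M : ℚ) - a) / q⌋ - ⌊(((0 : ℕ) : ℚ) - a) / q⌋ := by exact_mod_cast h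
  have h6 : ((M : ℚ) - a) / q - (((0 : ℕ) : ℚ) - a) / q = M / q := by push_cast; ring
  have h7 : |(k : ℚ) - M / q| ≤ 1 := by
    rw [abs_le]
    constructor <;> linarith
  have h8 := (Rat.cast_le (K := ℝ)).2 h7
  push_cast at h8
  exact h8

/-- The floor function set `{⌊x/n⌋}` in a residue class, counted through its large and its small
elements. -/
lemma abs_card_floor_set_sub_le {x : ℝ} {M : ℕ} (hM1 : 1 ≤ M) (hM : (M : ℝ) ^ 2 ≤ x)
    (hM' : x < ((M : ℝ) + 1) ^ 2) (q a : ℕ) :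
    |((((Finset.Icc 1 ⌊x⌋₊).image (fun n : ℕ => ⌊x / (n : ℝ)⌋₊)).filter
        (fun m : ℕ => m % q = a % q)).card : ℝ) -
      ((((Finset.Icc 1 M).filter fun n : ℕ => ⌊x / (n : ℝ)⌋₊ % q = a % q).card : ℝ) +
        ((Finset.Ioc 0 M).filter fun m => m % q = a % q).card)| ≤ 1 := by
  have hM0 : (1 : ℝ) ≤ M := by exact_mod_cast hM1
  have hx : 0 ≤ x := (sq_nonneg _).trans hM
  have hMx : M ≤ ⌊x⌋₊ := Nat.le_floor (by nlinarith)
  have hlarge : ∀ n : ℕ, 1 ≤ n → n ≤ M → M ≤ ⌊x / (n : ℝ)⌋₊ := fun n h1 h2 => by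
    have h3 : (0 : ℝ) < n := by exact_mod_cast h1
    have h4 : (n : ℝ) ≤ M := by exact_mod_cast h2
    apply Nat.le_floor
    rw [le_div_iff₀ h3]
    nlinarith
  have hsmall : ∀ n : ℕ, M < n → n ≤ ⌊x⌋₊ → ⌊x / (n : ℝ)⌋₊ ∈ Finset.Ioc 0 M := fun n h1 h2 => by
    have h3 : (M : ℝ) + 1 ≤ n := by exact_mod_cast h1
    have h4 : (n : ℝ) ≤ x := (Nat.le_floor_iff hx).1 h2
    have h5 : (0 : ℝ) < n := by linarith
    rw [Finset.mem_Ioc]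
    refine ⟨Nat.floor_pos.2 ((one_le_div h5).2 h4), ?_⟩
    rw [← Nat.lt_succ_iff, Nat.floor_lt (by positivity), div_lt_iff₀ h5]
    push_cast
    nlinarith
  have hanti : ∀ m n : ℕ, 1 ≤ m → m < n → n ≤ M →
      ⌊x / (n : ℝ)⌋₊ < ⌊x / (m : ℝ)⌋₊ := fun m n h1 h2 h3 => by
    have h4 : (1 : ℝ) ≤ m := by exact_mod_cast h1
    have h5 : (m : ℝ) + 1 ≤ n := by exact_mod_cast h2
    have h6 : (n : ℝ) ≤ M := by exact_mod_cast h3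
    have h7 : x / n + 1 ≤ x / m := by
      rw [div_add_one (by linarith), div_le_div_iff₀ (by linarith) (by linarith)]
      have h8 : (n : ℝ) * m ≤ x := by nlinarith
      nlinarith
    apply Nat.le_floor
    push_cast
    linarith [Nat.floor_le (by positivity : 0 ≤ x / (n : ℝ))]
  have hattain : ∀ m : ℕ, 1 ≤ m → m < M → ∃ n ∈ Finset.Icc 1 ⌊x⌋₊, ⌊x / (n : ℝ)⌋₊ = m := by
    intro m h1 h2
    have h3 : (1 : ℝ) ≤ m := by exact_mod_cast h1
    have h4 : (m : ℝ) + 1 ≤ M := by exact_mod_cast h2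
    have h5 : 1 ≤ x / m := by rw [one_le_div (by linarith)]; nlinarith
    have h6 : 1 ≤ ⌊x / (m : ℝ)⌋₊ := Nat.floor_pos.2 h5
    have h7 : (1 : ℝ) ≤ (⌊x / (m : ℝ)⌋₊ : ℝ) := by exact_mod_cast h6
    have h8 := Nat.floor_le (by positivity : 0 ≤ x / (m : ℝ))
    have h9 := Nat.lt_floor_add_one (x / (m : ℝ))
    have h11 : x / m ≤ x := div_le_self hx h3
    refine ⟨⌊x / (m : ℝ)⌋₊, Finset.mem_Icc.2 ⟨h6, Nat.floor_le_floor h11⟩, ?_⟩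
    rw [Nat.floor_eq_iff (by positivity), le_div_iff₀ (by linarith), div_lt_iff₀ (by linarith)]
    rw [le_div_iff₀ (by linarith)] at h8
    rw [div_lt_iff₀ (by linarith)] at h9
    generalize (⌊x / (m : ℝ)⌋₊ : ℝ) = k at *
    constructor
    · linarith
    · have h10 : (m : ℝ) ≤ k := by
        by_contra! hk
        have : (k + 1) * m < (m + 1) * m := by gcongr
        nlinarith
      nlinarith
  set A := ((Finset.Icc 1 M).filter fun n : ℕ => ⌊x / (n : ℝ)⌋₊ % q = a % q).image
    (fun n : ℕ => ⌊x / (n : ℝ)⌋₊) with hA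
  set T := ((Finset.Icc 1 ⌊x⌋₊).image (fun n : ℕ => ⌊x / (n : ℝ)⌋₊)).filter
        (fun m : ℕ => m % q = a % q) with hT
  have hAcard : A.card =
      ((Finset.Icc 1 M).filter fun n : ℕ => ⌊x / (n : ℝ)⌋₊ % q = a % q).card := by
    apply Finset.card_image_of_injOn
    intro m hm n hn hmn
    simp only [Finset.mem_coe, Finset.mem_filter, Finset.mem_Icc] at hm hn
    simp only at hmn
    by_contra hne
    rcases lt_or_gt_of_ne hne with h | h
    · have := hanti m n hm.1.1 h hn.1.2
      omega
    · have := hanti n m hn.1.1 h hm.1.2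
      omega
  have hup : T ⊆ A ∪ (Finset.Ioc 0 M).filter fun m => m % q = a % q := by
    intro m hm
    simp only [hT, Finset.mem_filter, Finset.mem_image] at hm
    obtain ⟨⟨n, hn, rfl⟩, hmod⟩ := hm
    rw [Finset.mem_Icc] at hn
    rw [Finset.mem_union]
    rcases le_or_gt n M with h | h
    · exact Or.inl (Finset.mem_image.2
        ⟨n, Finset.mem_filter.2 ⟨Finset.mem_Icc.2 ⟨hn.1, h⟩, hmod⟩, rfl⟩)
    · exact Or.inr (Finset.mem_filter.2 ⟨hsmall n h hn.2, hmod⟩)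
  have hlow : A ∪ ((Finset.Ioc 0 M).filter fun m => m % q = a % q).erase M ⊆ T := by
    intro m hm
    simp only [hT, Finset.mem_filter, Finset.mem_image]
    rw [Finset.mem_union] at hm
    rcases hm with hm | hm
    · obtain ⟨n, hn, rfl⟩ := Finset.mem_image.1 hm
      simp only [Finset.mem_filter, Finset.mem_Icc] at hn
      exact ⟨⟨n, Finset.mem_Icc.2 ⟨hn.1.1, hn.1.2.trans hMx⟩, rfl⟩, hn.2⟩
    · simp only [Finset.mem_erase, Finset.mem_filter, Finset.mem_Ioc] at hm
      exact ⟨hattain m (by omega) (by omega), hm.2.2⟩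
  have hdisj : Disjoint A (((Finset.Ioc 0 M).filter fun m => m % q = a % q).erase M) := by
    rw [Finset.disjoint_left]
    intro m hm hm'
    obtain ⟨n, hn, rfl⟩ := Finset.mem_image.1 hm
    simp only [Finset.mem_filter, Finset.mem_Icc] at hn
    simp only [Finset.mem_erase, Finset.mem_filter, Finset.mem_Ioc] at hm'
    have := hlarge n hn.1.1 hn.1.2
    omega
  have h1 := (Finset.card_le_card hup).trans (Finset.card_union_le _ _)
  have h2 := Finset.card_le_card hlow
  rw [Finset.card_union_of_disjoint hdisj] at h2
  have h3 := Finset.pred_card_le_card_erase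
    (s := (Finset.Ioc 0 M).filter fun m => m % q = a % q) (a := M)
  rw [← hAcard]
  generalize ((Finset.Ioc 0 M).filter fun m => m % q = a % q).card = k at *
  have h4 : A.card + k ≤ T.card + 1 := by omega
  have h5 : (T.card : ℝ) ≤ A.card + k := by exact_mod_cast h1
  have h6 : (A.card : ℝ) + k ≤ T.card + 1 := by exact_mod_cast h4
  rw [abs_le]
  constructor <;> linarith

theorem main_theorem :
    ∃ C : ℝ, 0 < C ∧ ∀ (x : ℝ) (q a : ℕ), 3 ≤ x → 1 ≤ q →
      (q : ℝ) ≤ x ^ ((1 : ℝ) / 4) / (Real.log x) ^ ((3 : ℝ) / 2) →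
      1 ≤ a → a ≤ q →
      |((((Finset.Icc 1 ⌊x⌋₊).image (fun n : ℕ => ⌊x / (n : ℝ)⌋₊)).filter
            (fun m : ℕ => m % q = a % q)).card : ℝ)
        - 2 * Real.sqrt x / q| ≤ C * (x / q) ^ ((1 : ℝ) / 3) * Real.log x := by
  refine ⟨1280, by norm_num, ?_⟩
  intro x q a hx hq hqx _ _
  have hx0 : 0 < x := by linarith
  have hq0 : (1 : ℝ) ≤ q := by exact_mod_cast hq
  have hlog : 1 ≤ Real.log x := by
    rw [Real.le_log_iff_exp_le hx0]
    linarith [Real.exp_one_lt_d9]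
  have hq4 : (q : ℝ) ^ 4 ≤ x := by
    have h1 : (q : ℝ) ≤ x ^ ((1 : ℝ) / 4) :=
      hqx.trans (div_le_self (by positivity) (Real.one_le_rpow hlog (by norm_num)))
    calc (q : ℝ) ^ 4 ≤ (x ^ ((1 : ℝ) / 4)) ^ 4 := by gcongr
      _ = x := by
        rw [← Real.rpow_natCast, ← Real.rpow_mul hx0.le]
        norm_num
  set R := (x / q) ^ ((1 : ℝ) / 3) with hR
  have hR0 : 0 < R := by positivity
  have hR3 : R ^ 3 = x / q := by
    rw [hR, ← Real.rpow_natCast, ← Real.rpow_mul (by positivity)]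
    norm_num
  have hqR : (q : ℝ) ≤ R := by
    refine le_of_pow_le_pow_left₀ (n := 3) (by norm_num) hR0.le ?_
    rw [hR3, le_div_iff₀ (by linarith)]
    linarith [pow_succ (q : ℝ) 3]
  have hxR : x ≤ (R ^ 2) ^ 2 := by
    have h1 : x = R ^ 3 * q := by rw [hR3]; field_simp
    rw [h1]
    calc R ^ 3 * q ≤ R ^ 3 * R := by gcongr
      _ = (R ^ 2) ^ 2 := by ring
  set M := ⌊√x⌋₊ with hMdef
  have hMle : (M : ℝ) ≤ √x := Nat.floor_le (Real.sqrt_nonneg x)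
  have hMlt : √x < M + 1 := Nat.lt_floor_add_one _
  have hsq : √x ^ 2 = x := Real.sq_sqrt hx0.le
  have hM1 : 1 ≤ M := Nat.le_floor (by rw [Nat.cast_one]; exact Real.one_le_sqrt.2 (by linarith))
  have hM0 : (1 : ℝ) ≤ M := by exact_mod_cast hM1
  have hMsq : (M : ℝ) ^ 2 ≤ x := by rw [← hsq]; gcongr
  have hMsq' : x < ((M : ℝ) + 1) ^ 2 := by
    rw [← hsq]; gcongr
  set J := Nat.log 2 M + 1 with hJdef
  have hJ : M + 1 ≤ 2 ^ J := Nat.lt_pow_succ_log_self (by norm_num) M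
  have hJlog : (J : ℝ) ≤ 2 * Real.log x := by
    have h1 : ((2 : ℝ) ^ Nat.log 2 M) ≤ M := by
      exact_mod_cast Nat.pow_log_le_self 2 (by omega)
    have h2 := Real.log_le_log (by positivity) h1
    have h3 := Real.log_le_log (by positivity) hMsq
    rw [Real.log_pow] at h2 h3
    have h4 := Real.log_two_gt_d9
    have h5 : (0 : ℝ) ≤ (Nat.log 2 M : ℝ) := by positivity
    rw [hJdef]
    push_cast at h3 ⊢
    nlinarith
  have hsum : ∀ c : ℝ, |∑ n ∈ Finset.Icc 1 M, (Int.fract (R ^ 3 / n + c) - 1 / 2)| ≤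
      319 * R * J := by
    intro c
    refine abs_sum_fract_div_le hR0 c J (M + 1) hJ fun n hn => ?_
    refine le_of_pow_le_pow_left₀ (n := 2) (by norm_num) (by positivity) (le_trans ?_ hxR)
    have h1 : (n : ℝ) ≤ M := by exact_mod_cast Nat.lt_succ_iff.1 hn
    exact le_trans (by gcongr) hMsq
  have hcount : (((Finset.Icc 1 M).filter fun n : ℕ => ⌊x / (n : ℝ)⌋₊ % q = a % q).card : ℝ) =
      M / q - ∑ n ∈ Finset.Icc 1 M, (Int.fract (R ^ 3 / n + -(a / q)) - 1 / 2) +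
        ∑ n ∈ Finset.Icc 1 M, (Int.fract (R ^ 3 / n + -((a + 1) / q)) - 1 / 2) := by
    rw [Finset.card_filter]
    push_cast
    have h1 : (M : ℝ) / q = ∑ n ∈ Finset.Icc 1 M, 1 / (q : ℝ) := by
      rw [Finset.sum_const, Nat.card_Icc, nsmul_eq_mul, Nat.add_sub_cancel]
      ring
    rw [h1, ← Finset.sum_sub_distrib, ← Finset.sum_add_distrib]
    refine Finset.sum_congr rfl fun n _ => ?_
    rw [ite_floor_mod_eq (by positivity) hq a, hR3]
    congr 4
    · ring
    · ring
  have h1 := abs_le.1 (abs_card_floor_set_sub_le hM1 hMsq hMsq' q a)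
  have h2 := abs_le.1 (abs_card_filter_mod_sub_le M hq a)
  have h3 := abs_le.1 (hsum (-(a / q)))
  have h4 := abs_le.1 (hsum (-((a + 1) / q)))
  rw [hcount] at h1
  have h5 : √x / q - M / q ≤ 1 := by
    rw [← sub_div, div_le_one (by linarith)]
    linarith
  have h6 : (M : ℝ) / q ≤ √x / q := by gcongr
  have h7 : 1 ≤ R * Real.log x := by nlinarith
  have h8 : 319 * R * J ≤ 638 * (R * Real.log x) := by
    calc 319 * R * J ≤ 319 * R * (2 * Real.log x) := by gcongr
      _ = _ := by ring
  have h9 : 2 * √x / q = 2 * (√x / q) := by ring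
  rw [abs_le, h9, mul_assoc]
  constructor <;> linarith
end

section
/- For every fixed positive integer q, S(x;q) := |{⌊x/n⌋ : 1 ≤ n ≤ x, q divides ⌊x/n⌋}| satisfies S(x;q) ∼ 2√x/q as x → ∞. -/
section

open Filter Finset MeasureTheory Topology

theorem norm_sum_range_sub_sum_range_add_le {a : ℕ → ℂ} (ha : ∀ n, ‖a n‖ ≤ 1) (M j : ℕ) :
    ‖∑ n ∈ range M, a n - ∑ n ∈ range M, a (n + j)‖ ≤ 2 * j := by
  induction j with
  | zero => simp
  | succ j ih =>
    have h : ∑ n ∈ range M, a (n + j) - ∑ n ∈ range M, a (n + (j + 1)) = a j - a (M + j) := by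
      have := Finset.sum_range_sub' (fun n => a (n + j)) M
      rw [← Finset.sum_sub_distrib]
      simpa [add_assoc, add_comm, add_left_comm] using this
    calc _ = ‖(∑ n ∈ range M, a n - ∑ n ∈ range M, a (n + j)) + (a j - a (M + j))‖ := by
            rw [← h, sub_add_sub_cancel]
      _ ≤ 2 * j + (1 + 1) := (norm_add_le _ _).trans
            (add_le_add ih ((norm_sub_le _ _).trans (add_le_add (ha _) (ha _))))
      _ = _ := by push_cast; ring

theorem norm_sum_range_le_sum_norm_average {a : ℕ → ℂ} (ha : ∀ n, ‖a n‖ ≤ 1) (M : ℕ) {H : ℕ}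
    (hH : 0 < H) :
    ‖∑ n ∈ range M, a n‖ ≤
      ∑ n ∈ range M, ‖(H : ℂ)⁻¹ * ∑ j ∈ range H, a (n + j)‖ + 2 * H := by
  have hH' : (H : ℂ) ≠ 0 := by exact_mod_cast hH.ne'
  have hHr : (H : ℝ) ≠ 0 := by exact_mod_cast hH.ne'
  have key : ∑ n ∈ range M, a n = ∑ n ∈ range M, (H : ℂ)⁻¹ * ∑ j ∈ range H, a (n + j) +
      (H : ℂ)⁻¹ * ∑ j ∈ range H, (∑ n ∈ range M, a n - ∑ n ∈ range M, a (n + j)) := by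
    rw [← Finset.mul_sum, Finset.sum_comm, Finset.sum_sub_distrib, Finset.sum_const, card_range,
      nsmul_eq_mul]
    field_simp
    ring
  rw [key]
  refine (norm_add_le _ _).trans (add_le_add (norm_sum_le _ _) ?_)
  rw [norm_mul, norm_inv, Complex.norm_natCast, inv_mul_le_iff₀ (by positivity)]
  refine (norm_sum_le _ _).trans ?_
  calc _ ≤ ∑ j ∈ range H, (2 * H : ℝ) := Finset.sum_le_sum fun j hj =>
        (norm_sum_range_sub_sum_range_add_le ha M j).trans (by
          have : (j : ℝ) ≤ H := by exact_mod_cast (mem_range.1 hj).le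
          linarith)
    _ = _ := by simp

theorem integral_comp_floor_mul (g : ℕ → ℝ) {M : ℕ} (hM : 0 < M) :
    ∫ t in (0 : ℝ)..1, g ⌊t * M⌋₊ = (M : ℝ)⁻¹ * ∑ n ∈ range M, g n := by
  have hM' : (M : ℝ) ≠ 0 := by exact_mod_cast hM.ne'
  have hEq (n : ℕ) : Set.EqOn (fun _ => g n) (fun u : ℝ => g ⌊u⌋₊) (Set.Ioo (n : ℝ) (n + 1)) := by
    intro u hu
    have : ⌊u⌋₊ = n := (Nat.floor_eq_iff ((Nat.cast_nonneg n).trans hu.1.le)).2 ⟨hu.1.le, hu.2⟩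
    simp [this]
  rw [intervalIntegral.integral_comp_mul_right (fun u => g ⌊u⌋₊) hM', zero_mul, one_mul,
    smul_eq_mul]
  congr 1
  have h := intervalIntegral.sum_integral_adjacent_intervals (μ := volume)
    (f := fun u : ℝ => g ⌊u⌋₊) (a := fun n : ℕ => (n : ℝ)) (n := M) (fun n _ => by
      rw [Nat.cast_succ]
      refine (intervalIntegrable_const (c := g n)).congr_uIoo ?_
      rw [Set.uIoo_of_le (by linarith)]
      exact hEq n)
  simp only [Nat.cast_zero] at h
  rw [← h]
  refine Finset.sum_congr rfl fun n _ => ?_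
  rw [Nat.cast_succ, ← intervalIntegral.integral_congr_uIoo (f := fun _ => g n)]
  · simp
  · rw [Set.uIoo_of_le (by linarith)]
    exact hEq n

theorem continuous_coe_fourierChar : Continuous fun u : ℝ => (Real.fourierChar u : ℂ) := by
  simp only [Real.fourierChar_apply]
  fun_prop

theorem tendsto_average_fourierChar_mul {θ : ℝ} (hθ : ∀ k : ℤ, (k : ℝ) ≠ θ) :
    Tendsto (fun H : ℕ => ‖(H : ℂ)⁻¹ * ∑ j ∈ range H, (Real.fourierChar (j * θ) : ℂ)‖)
      atTop (𝓝 0) := by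
  have hne : (Real.fourierChar θ : ℂ) ≠ 1 := by
    rw [Real.fourierChar_apply, Ne, Complex.exp_eq_one_iff]
    rintro ⟨k, hk⟩
    apply hθ k
    have h2 : (2 * Real.pi * Complex.I : ℂ) ≠ 0 := Complex.two_pi_I_ne_zero
    have : (k : ℂ) = θ := by
      apply mul_right_cancel₀ h2
      rw [← hk]; push_cast; ring
    exact_mod_cast this
  have hpow (j : ℕ) : (Real.fourierChar (j * θ) : ℂ) = (Real.fourierChar θ : ℂ) ^ j := by
    rw [← nsmul_eq_mul, AddChar.map_nsmul_eq_pow, Circle.coe_pow]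
  simp only [hpow]
  refine squeeze_zero (fun _ => norm_nonneg _) (g := fun H : ℕ =>
    (2 / ‖(Real.fourierChar θ : ℂ) - 1‖) * (H : ℝ)⁻¹) (fun H => ?_) ?_
  · rw [geom_sum_eq hne, norm_mul, norm_inv, Complex.norm_natCast, mul_comm, norm_div]
    gcongr
    refine (norm_sub_le _ _).trans ?_
    rw [norm_pow, Circle.norm_coe, one_pow, norm_one]
    norm_num
  · simpa using (tendsto_inv_atTop_nhds_zero_nat (𝕜 := ℝ)).const_mul
      (2 / ‖(Real.fourierChar θ : ℂ) - 1‖)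

theorem norm_average_fourierChar_le_one (H : ℕ) (f : ℕ → ℝ) :
    ‖(H : ℂ)⁻¹ * ∑ j ∈ range H, (Real.fourierChar (f j) : ℂ)‖ ≤ 1 := by
  rw [norm_mul, norm_inv, Complex.norm_natCast]
  refine inv_mul_le_one_of_le₀ ((norm_sum_le _ _).trans ?_) (Nat.cast_nonneg _)
  simp [Circle.norm_coe]

theorem tendsto_integral_average_fourierChar {c : ℝ} (hc : c ≠ 0) :
    Tendsto (fun H : ℕ => ∫ t in (0 : ℝ)..1,
      ‖(H : ℂ)⁻¹ * ∑ j ∈ range H, (Real.fourierChar (j * (-c / t ^ 2)) : ℂ)‖) atTop (𝓝 0) := by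
  have hcount : (Set.range fun k : ℤ => √(-c / k)).Countable := Set.countable_range _
  have h := intervalIntegral.tendsto_integral_filter_of_dominated_convergence (μ := volume)
    (a := 0) (b := 1) (l := atTop) (f := fun _ => (0 : ℝ)) (F := fun (H : ℕ) (t : ℝ) =>
      ‖(H : ℂ)⁻¹ * ∑ j ∈ range H, (Real.fourierChar (j * (-c / t ^ 2)) : ℂ)‖) (fun _ => 1)
    (Eventually.of_forall fun H => ?_) (Eventually.of_forall fun H => ?_) (by simp) ?_
  · simpa using h
  · have := continuous_coe_fourierChar.measurable
    refine Measurable.aestronglyMeasurable ?_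
    refine ((Finset.measurable_fun_sum _ fun j _ => this.comp ?_).const_mul _).norm
    fun_prop
  · exact Eventually.of_forall fun t _ => by
      simpa using norm_average_fourierChar_le_one H fun j => j * (-c / t ^ 2)
  · filter_upwards [hcount.ae_notMem volume] with t ht ht'
    rw [Set.uIoc_of_le zero_le_one] at ht'
    refine tendsto_average_fourierChar_mul fun k hk => ht ⟨k, ?_⟩
    have ht0 := ht'.1.ne'
    simp only [hk]
    rw [div_div_cancel₀ (neg_ne_zero.2 hc), Real.sqrt_sq ht'.1.le]

section

variable {X : ℕ → ℝ} {M : ℕ → ℕ}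

theorem tendsto_sub_div_floor_mul (hM : Tendsto M atTop atTop)
    (hX : Tendsto (fun N => X N / (M N : ℝ) ^ 2) atTop (𝓝 1)) (j : ℕ) {t : ℝ} (ht : 0 < t) :
    Tendsto (fun N => X N / ((⌊t * M N⌋₊ + j : ℕ) + 1) - X N / (⌊t * M N⌋₊ + 1)) atTop
      (𝓝 (-j / t ^ 2)) := by
  have hMr : Tendsto (fun N => (M N : ℝ)) atTop atTop := tendsto_natCast_atTop_atTop.comp hM
  have hfl : Tendsto (fun N => (⌊t * M N⌋₊ : ℝ) / M N) atTop (𝓝 t) :=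
    (tendsto_nat_floor_mul_div_atTop ht.le).comp hMr
  have hadd (C : ℝ) : Tendsto (fun N => ((⌊t * M N⌋₊ : ℝ) + C) / M N) atTop (𝓝 t) := by
    simpa [add_div] using hfl.add (hMr.const_div_atTop C)
  have h := ((hX.div ((hadd (j + 1)).mul (hadd 1)) (by positivity)).const_mul (-j : ℝ))
  have e : (-j : ℝ) * (1 / (t * t)) = -j / t ^ 2 := by field_simp
  rw [e] at h
  refine h.congr' ?_
  filter_upwards [hM.eventually_gt_atTop 0] with N hN
  have h0 : (M N : ℝ) ≠ 0 := by exact_mod_cast hN.ne'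
  have h1 : ((⌊t * M N⌋₊ : ℝ) + 1) ≠ 0 := by positivity
  have h2 : ((⌊t * M N⌋₊ : ℝ) + (j + 1)) ≠ 0 := by positivity
  have h3 : ((⌊t * M N⌋₊ : ℝ) + j + 1) ≠ 0 := by positivity
  simp only [Pi.div_apply]
  push_cast
  field_simp
  ring

theorem tendsto_average_fourierChar_div (hM : Tendsto M atTop atTop)
    (hX : Tendsto (fun N => X N / (M N : ℝ) ^ 2) atTop (𝓝 1)) {c : ℝ} (hc : c ≠ 0) :
    Tendsto (fun N => (M N : ℂ)⁻¹ *
      ∑ n ∈ range (M N), (Real.fourierChar (c * (X N / (n + 1))) : ℂ)) atTop (𝓝 0) := by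
  have hMr : Tendsto (fun N => (M N : ℝ)) atTop atTop := tendsto_natCast_atTop_atTop.comp hM
  have hfac (N H n : ℕ) :
      ‖(H : ℂ)⁻¹ * ∑ j ∈ range H, (Real.fourierChar (c * (X N / ((n + j : ℕ) + 1))) : ℂ)‖ =
      ‖(H : ℂ)⁻¹ * ∑ j ∈ range H,
        (Real.fourierChar (c * (X N / ((n + j : ℕ) + 1) - X N / (n + 1))) : ℂ)‖ := by
    have : ∑ j ∈ range H, (Real.fourierChar (c * (X N / ((n + j : ℕ) + 1))) : ℂ) =
        (Real.fourierChar (c * (X N / (n + 1))) : ℂ) * ∑ j ∈ range H,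
        (Real.fourierChar (c * (X N / ((n + j : ℕ) + 1) - X N / (n + 1))) : ℂ) := by
      rw [Finset.mul_sum]
      refine Finset.sum_congr rfl fun j _ => ?_
      rw [← Circle.coe_mul, ← AddChar.map_add_eq_mul]
      ring_nf
    rw [this, mul_left_comm, norm_mul, Circle.norm_coe, one_mul]
  have hlim (H : ℕ) : Tendsto (fun N => ∫ t in (0 : ℝ)..1, ‖(H : ℂ)⁻¹ * ∑ j ∈ range H,
      (Real.fourierChar (c * (X N / ((⌊t * M N⌋₊ + j : ℕ) + 1))) : ℂ)‖) atTop
      (𝓝 (∫ t in (0 : ℝ)..1,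
        ‖(H : ℂ)⁻¹ * ∑ j ∈ range H, (Real.fourierChar (j * (-c / t ^ 2)) : ℂ)‖)) := by
    refine intervalIntegral.tendsto_integral_filter_of_dominated_convergence (fun _ => 1)
      (Eventually.of_forall fun N => ?_) (Eventually.of_forall fun N => ?_) (by simp) ?_
    · refine Measurable.aestronglyMeasurable ?_
      exact (measurable_from_nat (f := fun n : ℕ => ‖(H : ℂ)⁻¹ * ∑ j ∈ range H,
        (Real.fourierChar (c * (X N / ((n + j : ℕ) + 1))) : ℂ)‖)).comp
        (Nat.measurable_floor.comp (measurable_id.mul_const _))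
    · exact Eventually.of_forall fun t _ => by
        simpa using norm_average_fourierChar_le_one H
          fun j => c * (X N / ((⌊t * M N⌋₊ + j : ℕ) + 1))
    · refine Eventually.of_forall fun t ht => ?_
      rw [Set.uIoc_of_le zero_le_one] at ht
      simp only [hfac]
      refine ((tendsto_finsetSum _ fun j _ => ?_).const_mul _).norm
      have h := ((tendsto_sub_div_floor_mul hM hX j ht.1).const_mul c)
      rw [show c * (-j / t ^ 2) = j * (-c / t ^ 2) by ring] at h
      exact (continuous_coe_fourierChar.tendsto _).comp h
  rw [tendsto_zero_iff_norm_tendsto_zero, Metric.tendsto_atTop']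
  intro ε hε
  obtain ⟨H, hH0, hH⟩ := ((eventually_gt_atTop 0).and
    ((tendsto_integral_average_fourierChar hc).eventually_lt_const hε)).exists
  have hsum := (hlim H).add (hMr.const_div_atTop (2 * H : ℝ))
  rw [add_zero] at hsum
  obtain ⟨N₀, hN₀⟩ := eventually_atTop.1
    ((hsum.eventually_lt_const hH).and (hM.eventually_gt_atTop 0))
  refine ⟨N₀, fun N hN => ?_⟩
  obtain ⟨h1, h2⟩ := hN₀ N hN.le
  rw [Real.dist_eq, sub_zero, abs_norm]
  refine lt_of_le_of_lt ?_ h1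
  rw [integral_comp_floor_mul (fun n : ℕ => ‖(H : ℂ)⁻¹ * ∑ j ∈ range H,
        (Real.fourierChar (c * (X N / ((n + j : ℕ) + 1))) : ℂ)‖) h2, norm_mul, norm_inv,
    Complex.norm_natCast, div_eq_inv_mul, ← mul_add]
  gcongr
  exact norm_sum_range_le_sum_norm_average
    (a := fun n : ℕ => (Real.fourierChar (c * (X N / (n + 1))) : ℂ)) (by simp [Circle.norm_coe]) _ hH0

end

section

variable {M : ℕ → ℕ} {y : ℕ → ℕ → UnitAddCircle}

theorem tendsto_average_continuousMap (hM : ∀ N, 0 < M N)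
    (h : ∀ k : ℤ, k ≠ 0 → Tendsto (fun N => (M N : ℂ)⁻¹ * ∑ n ∈ range (M N), fourier k (y N n))
      atTop (𝓝 0)) (f : C(UnitAddCircle, ℂ)) :
    Tendsto (fun N => (M N : ℂ)⁻¹ * ∑ n ∈ range (M N), f (y N n)) atTop
      (𝓝 (∫ z, f z ∂AddCircle.haarAddCircle)) := by
  have hint (g : C(UnitAddCircle, ℂ)) : Integrable g AddCircle.haarAddCircle :=
    g.continuous.integrable_of_hasCompactSupport (HasCompactSupport.of_compactSpace _)
  have hspan : ∀ g ∈ Submodule.span ℂ (Set.range (fourier (T := 1))),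
      Tendsto (fun N => (M N : ℂ)⁻¹ * ∑ n ∈ range (M N), g (y N n)) atTop
        (𝓝 (∫ z, g z ∂AddCircle.haarAddCircle)) := by
    intro g hg
    induction hg using Submodule.span_induction with
    | mem g hg =>
      obtain ⟨k, rfl⟩ := hg
      have hk : ∫ z, fourier k z ∂AddCircle.haarAddCircle (T := 1) = if k = 0 then 1 else 0 := by
        have := congrFun (fourierCoeff_fourier (T := 1) k) 0
        simpa [fourierCoeff, Pi.single_apply, eq_comm] using this
      rw [hk]
      split_ifs with h0
      · subst h0
        refine tendsto_const_nhds.congr fun N => ?_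
        have : (M N : ℂ) ≠ 0 := by exact_mod_cast (hM N).ne'
        simp [this]
      · exact h k h0
    | zero => simp
    | add f g _ _ hf hg =>
      simp only [ContinuousMap.add_apply, Finset.sum_add_distrib, mul_add]
      rw [integral_add (hint f) (hint g)]
      exact hf.add hg
    | smul a f _ hf =>
      simp only [ContinuousMap.smul_apply, smul_eq_mul, ← Finset.mul_sum, mul_left_comm _ a]
      rw [integral_const_mul]
      exact hf.const_mul a
  have hmem : f ∈ closure (Submodule.span ℂ (Set.range (fourier (T := 1))) :
      Set C(UnitAddCircle, ℂ)) := by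
    rw [← Submodule.topologicalClosure_coe, span_fourier_closure_eq_top]
    trivial
  rw [Metric.tendsto_atTop]
  intro ε hε
  obtain ⟨g, hg, hfg⟩ := Metric.mem_closure_iff.1 hmem (ε / 3) (by positivity)
  have hpt (z) : ‖f z - g z‖ ≤ ε / 3 := by
    rw [← dist_eq_norm]
    exact (ContinuousMap.dist_apply_le_dist z).trans hfg.le
  obtain ⟨N₀, hN₀⟩ := Metric.tendsto_atTop.1 (hspan g hg) (ε / 3) (by positivity)
  refine ⟨N₀, fun N hN => ?_⟩
  have h1 : ‖(M N : ℂ)⁻¹ * ∑ n ∈ range (M N), f (y N n) -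
      (M N : ℂ)⁻¹ * ∑ n ∈ range (M N), g (y N n)‖ ≤ ε / 3 := by
    rw [← mul_sub, ← Finset.sum_sub_distrib, norm_mul, norm_inv, Complex.norm_natCast,
      inv_mul_le_iff₀ (by exact_mod_cast hM N)]
    refine (norm_sum_le _ _).trans ((Finset.sum_le_sum fun n _ => hpt (y N n)).trans ?_)
    simp
  have h2 : ‖∫ z, f z ∂AddCircle.haarAddCircle - ∫ z, g z ∂AddCircle.haarAddCircle‖ ≤ ε / 3 := by
    rw [← integral_sub (hint f) (hint g)]
    simpa using norm_integral_le_of_norm_le_const (μ := AddCircle.haarAddCircle)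
      (Eventually.of_forall hpt)
  have h3 := hN₀ N hN
  rw [← dist_eq_norm] at h1 h2
  rw [dist_comm] at h2
  exact (dist_triangle4 _ _ _ _).trans_lt (by linarith)

theorem tendsto_card_filter_mem_div (hM : ∀ N, 0 < M N)
    (h : ∀ k : ℤ, k ≠ 0 → Tendsto (fun N => (M N : ℂ)⁻¹ * ∑ n ∈ range (M N), fourier k (y N n))
      atTop (𝓝 0)) {E : Set UnitAddCircle} [DecidablePred (· ∈ E)]
    (hE : volume (frontier E) = 0) :
    Tendsto (fun N => (#{n ∈ range (M N) | y N n ∈ E} : ℝ) / M N) atTop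
      (𝓝 (volume.real E)) := by
  have hvol : (volume : Measure UnitAddCircle) = AddCircle.haarAddCircle := by
    rw [AddCircle.volume_eq_smul_haarAddCircle]; simp
  let ν (N : ℕ) : Measure UnitAddCircle :=
    (M N : ENNReal)⁻¹ • ∑ n ∈ range (M N), Measure.dirac (y N n)
  have hν (N : ℕ) : IsProbabilityMeasure (ν N) := ⟨by
    have : (M N : ENNReal) ≠ 0 := by exact_mod_cast (hM N).ne'
    simp [ν, ENNReal.inv_mul_cancel this (ENNReal.natCast_ne_top _)]⟩
  let νs (N : ℕ) : ProbabilityMeasure UnitAddCircle := ⟨ν N, hν N⟩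
  let μ : ProbabilityMeasure UnitAddCircle := ⟨AddCircle.haarAddCircle, inferInstance⟩
  have hlim : Tendsto νs atTop (𝓝 μ) := by
    rw [ProbabilityMeasure.tendsto_iff_forall_integral_rclike_tendsto ℂ]
    intro f
    refine (tendsto_average_continuousMap hM h f.toContinuousMap).congr fun N => ?_
    simp only [νs, ν, ProbabilityMeasure.coe_mk, integral_smul_measure]
    rw [integral_finsetSum_measure fun i _ => integrable_dirac (by simp)]
    simp
  have key := ProbabilityMeasure.tendsto_measure_of_null_frontier_of_tendsto' hlim (E := E)
    (by simpa [μ, ← hvol] using hE)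
  have key' := (ENNReal.tendsto_toReal (measure_ne_top _ _)).comp key
  rw [Measure.real, hvol]
  refine key'.congr fun N => ?_
  simp only [νs, ν, ProbabilityMeasure.coe_mk, Function.comp_apply, Measure.smul_apply,
    Measure.finsetSum_apply, Measure.dirac_apply, smul_eq_mul, Set.indicator_apply, Pi.one_apply,
    ENNReal.toReal_mul, Finset.sum_boole, ENNReal.toReal_inv, ENNReal.toReal_natCast]
  rw [div_eq_inv_mul]

end

theorem coe_unitAddCircle_eq_iff {s t : ℝ} :
    (s : UnitAddCircle) = t ↔ ∃ k : ℤ, (k : ℝ) = s - t := by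
  rw [← sub_eq_zero, ← AddCircle.coe_sub, AddCircle.coe_eq_zero_iff]
  simp

theorem measure_frontier_eq_zero_of_ball_subset_subset_closedBall {E : Set UnitAddCircle}
    {z : UnitAddCircle} {ε : ℝ} (h₁ : Metric.ball z ε ⊆ E) (h₂ : E ⊆ Metric.closedBall z ε) :
    volume (frontier E) = 0 := by
  have hsub : frontier E ⊆ Metric.closedBall z ε \ Metric.ball z ε :=
    Set.sdiff_subset_sdiff (closure_minimal h₂ Metric.isClosed_closedBall)
      (interior_maximal h₁ Metric.isOpen_ball)
  exact measure_mono_null hsub (ae_le_set.1 AddCircle.closedBall_ae_eq_ball.le)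

theorem measureReal_eq_of_ball_subset_subset_closedBall {E : Set UnitAddCircle}
    {z : UnitAddCircle} {ε : ℝ} (hε₀ : 0 ≤ ε) (hε : 2 * ε ≤ 1) (h₁ : Metric.ball z ε ⊆ E)
    (h₂ : E ⊆ Metric.closedBall z ε) : volume.real E = 2 * ε := by
  have hE : volume E = volume (Metric.closedBall z ε) :=
    (measure_mono h₂).antisymm ((measure_congr AddCircle.closedBall_ae_eq_ball).le.trans
      (measure_mono h₁))
  rw [Measure.real, hE, AddCircle.volume_closedBall, min_eq_right hε,
    ENNReal.toReal_ofReal (by positivity)]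

theorem ball_subset_image_Ico (c : ℝ) :
    Metric.ball (c : UnitAddCircle) c ⊆ ((↑) : ℝ → UnitAddCircle) '' Set.Ico 0 (2 * c) := by
  intro z hz
  obtain ⟨s, rfl⟩ := QuotientAddGroup.mk_surjective z
  rw [mem_ball_iff_norm] at hz
  change ‖((s - c : ℝ) : UnitAddCircle)‖ < c at hz
  rw [UnitAddCircle.norm_eq, abs_lt] at hz
  refine ⟨s - round (s - c), ⟨by linarith, by linarith⟩, ?_⟩
  exact coe_unitAddCircle_eq_iff.2 ⟨-round (s - c), by push_cast; ring⟩

theorem image_Ico_subset_closedBall (c : ℝ) :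
    ((↑) : ℝ → UnitAddCircle) '' Set.Ico 0 (2 * c) ⊆ Metric.closedBall (c : UnitAddCircle) c := by
  rintro _ ⟨t, ht, rfl⟩
  rw [mem_closedBall_iff_norm]
  change ‖((t - c : ℝ) : UnitAddCircle)‖ ≤ c
  rw [UnitAddCircle.norm_eq]
  refine (round_le (t - c) 0).trans ?_
  rw [Int.cast_zero, sub_zero, abs_le]
  exact ⟨by linarith [ht.1], by linarith [ht.2]⟩

theorem coe_div_mem_image_Ico_iff {q : ℕ} (hq : 0 < q) (N d : ℕ) :
    (((N / d : ℝ) / q : ℝ) : UnitAddCircle) ∈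
      ((↑) : ℝ → UnitAddCircle) '' Set.Ico 0 (2 * (2 * q : ℝ)⁻¹) ↔ q ∣ N / d := by
  have hq' : (0 : ℝ) < q := by exact_mod_cast hq
  have hc : 2 * (2 * q : ℝ)⁻¹ = 1 / q := by field_simp
  have hN : (0 : ℝ) ≤ N / d := by positivity
  rw [hc, ← Nat.floor_div_eq_div (K := ℝ)]
  constructor
  · rintro ⟨t, ⟨ht0, ht1⟩, ht⟩
    obtain ⟨k, hk⟩ := coe_unitAddCircle_eq_iff.1 ht
    have hNd : (N / d : ℝ) = q * (t - k) := by
      rw [hk]; field_simp; ring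
    have hqt : q * t < 1 := by rwa [lt_div_iff₀' hq'] at ht1
    have hfl : ⌊(N / d : ℝ)⌋ = q * -k := by
      rw [Int.floor_eq_iff, hNd]
      push_cast
      exact ⟨by nlinarith, by linarith⟩
    rw [← Int.natCast_dvd_natCast, Int.natCast_floor_eq_floor hN, hfl]
    exact dvd_mul_right _ _
  · rintro ⟨k, hk⟩
    obtain ⟨h1, h2⟩ := (Nat.floor_eq_iff hN).1 hk
    push_cast at h1 h2
    refine ⟨(N / d : ℝ) / q - k, ⟨?_, ?_⟩, coe_unitAddCircle_eq_iff.2 ⟨-k, by simp⟩⟩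
    · rw [sub_nonneg, le_div_iff₀ hq']
      linarith
    · rw [sub_lt_iff_lt_add, div_lt_iff₀ hq', add_mul, one_div_mul_cancel hq'.ne']
      linarith

section

variable (q N : ℕ)

theorem card_filter_dvd_image_div_le :
    #{m ∈ (Icc 1 N).image (N / ·) | q ∣ m} ≤
      #{n ∈ range (N.sqrt + 1) | q ∣ N / (n + 1)} + N.sqrt / q := by
  rw [← Nat.Ioc_filter_dvd_card_eq_div]
  refine le_trans (card_le_card (t := image (fun n => N / (n + 1))
    {n ∈ range (N.sqrt + 1) | q ∣ N / (n + 1)} ∪ {m ∈ Ioc 0 N.sqrt | q ∣ m}) ?_)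
    ((card_union_le _ _).trans (Nat.add_le_add_right card_image_le _))
  intro m hm
  simp only [mem_filter, mem_image, mem_Icc, mem_union, mem_range, mem_Ioc] at hm ⊢
  obtain ⟨⟨n, ⟨hn1, hnN⟩, rfl⟩, hq⟩ := hm
  rcases lt_or_ge N.sqrt n with h | h
  · refine Or.inr ⟨⟨Nat.div_pos hnN hn1, ?_⟩, hq⟩
    have h1 : N < (N.sqrt + 1) * n :=
      (Nat.lt_succ_sqrt N).trans_le (Nat.mul_le_mul_left _ h)
    exact Nat.lt_succ_iff.1 (Nat.div_lt_of_lt_mul (by rwa [mul_comm] at h1))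
  · exact Or.inl ⟨n - 1, ⟨by omega, by rwa [Nat.sub_add_cancel hn1]⟩,
      by rw [Nat.sub_add_cancel hn1]⟩

theorem div_succ_lt_div_of_succ_le_sqrt {N d : ℕ} (hd : 0 < d) (h : d + 1 ≤ N.sqrt) :
    N / (d + 1) < N / d := by
  have hN : d * (d + 1) ≤ N :=
    (Nat.mul_le_mul (by omega) h).trans (Nat.sqrt_le N)
  rw [Nat.lt_iff_add_one_le, Nat.le_div_iff_mul_le hd]
  have h1 : N / (d + 1) * (d + 1) ≤ N := Nat.div_mul_le_self _ _
  have h2 : d ≤ N / (d + 1) := (Nat.le_div_iff_mul_le (by omega)).2 hN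
  nlinarith

theorem strictAntiOn_div_Icc_sqrt : StrictAntiOn (N / ·) (Set.Icc 1 N.sqrt) := by
  rintro a ⟨ha, -⟩ b ⟨-, hb⟩ hab
  exact (Nat.div_le_div_left hab (by omega)).trans_lt
    (div_succ_lt_div_of_succ_le_sqrt ha (by omega))

theorem div_div_eq_of_lt_sqrt {N m : ℕ} (hm : 0 < m) (h : m < N.sqrt) : N / (N / m) = m := by
  have h1 := div_succ_lt_div_of_succ_le_sqrt hm h
  have h2 : 0 < N / m := (Nat.zero_le _).trans_lt h1
  have h3 := Nat.div_mul_le_self N m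
  refine Nat.div_eq_of_lt_le (by rwa [mul_comm]) ?_
  have := (Nat.div_lt_iff_lt_mul (by omega)).1 h1
  rwa [mul_comm]

theorem le_card_filter_dvd_image_div :
    #{n ∈ range (N.sqrt + 1) | q ∣ N / (n + 1)} + N.sqrt / q ≤
      #{m ∈ (Icc 1 N).image (N / ·) | q ∣ m} + 2 := by
  have hA : #{n ∈ range (N.sqrt + 1) | q ∣ N / (n + 1)} ≤
      #{n ∈ range N.sqrt | q ∣ N / (n + 1)} + 1 := by
    rw [range_add_one, filter_insert]
    split_ifs
    · exact card_insert_le _ _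
    · omega
  have hB : N.sqrt / q ≤ #{m ∈ Ioo 0 N.sqrt | q ∣ m} + 1 := by
    rw [← Nat.Ioc_filter_dvd_card_eq_div]
    refine (card_le_card (t := insert N.sqrt {m ∈ Ioo 0 N.sqrt | q ∣ m}) ?_).trans
      (card_insert_le _ _)
    intro m
    simp only [mem_filter, mem_Ioc, mem_insert, mem_Ioo]
    grind
  have hinj : #(image (fun n => N / (n + 1)) {n ∈ range N.sqrt | q ∣ N / (n + 1)}) =
      #{n ∈ range N.sqrt | q ∣ N / (n + 1)} := by
    refine card_image_of_injOn fun a ha b hb hab => ?_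
    simp only [coe_filter, mem_range, Set.mem_ofPred_eq] at ha hb
    exact Nat.succ_injective ((strictAntiOn_div_Icc_sqrt N).injOn
      ⟨by omega, by omega⟩ ⟨by omega, by omega⟩ hab)
  have hdisj : Disjoint (image (fun n => N / (n + 1)) {n ∈ range N.sqrt | q ∣ N / (n + 1)})
      {m ∈ Ioo 0 N.sqrt | q ∣ m} := by
    rw [disjoint_left]
    simp only [mem_image, mem_filter, mem_range, mem_Ioo]
    rintro _ ⟨n, ⟨hn, -⟩, rfl⟩ ⟨⟨-, h⟩, -⟩
    refine h.not_ge ((Nat.le_div_iff_mul_le (by omega)).2 ?_)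
    exact (Nat.mul_le_mul_left _ hn).trans (Nat.sqrt_le N)
  have hsub : image (fun n => N / (n + 1)) {n ∈ range N.sqrt | q ∣ N / (n + 1)} ∪
      {m ∈ Ioo 0 N.sqrt | q ∣ m} ⊆ {m ∈ (Icc 1 N).image (N / ·) | q ∣ m} := by
    have hle := Nat.sqrt_le_self N
    intro m hm
    simp only [mem_filter, mem_image, mem_Icc, mem_union, mem_range, mem_Ioo] at hm ⊢
    rcases hm with ⟨n, ⟨hn, hq⟩, rfl⟩ | ⟨⟨h0, h⟩, hq⟩
    · exact ⟨⟨n + 1, ⟨by omega, by omega⟩, rfl⟩, hq⟩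
    · exact ⟨⟨N / m, ⟨Nat.div_pos (by omega) h0, Nat.div_le_self _ _⟩,
        div_div_eq_of_lt_sqrt h0 h⟩, hq⟩
  have := card_le_card hsub
  rw [card_union_of_disjoint hdisj, hinj] at this
  omega

end

theorem tendsto_sqrt_succ_atTop : Tendsto (fun N : ℕ => N.sqrt + 1) atTop atTop :=
  tendsto_atTop_mono (fun _ => Nat.le_succ _)
    (tendsto_atTop.2 fun b => eventually_atTop.2 ⟨b * b, fun _ h => Nat.le_sqrt.2 h⟩)

theorem tendsto_natSqrt_div_sqrt :
    Tendsto (fun N : ℕ => (N.sqrt : ℝ) / √N) atTop (𝓝 1) := by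
  simp only [← Real.nat_floor_real_sqrt_eq_nat_sqrt]
  exact tendsto_nat_floor_div_atTop.comp (Real.tendsto_sqrt_atTop.comp tendsto_natCast_atTop_atTop)

theorem tendsto_inv_sqrt_natCast : Tendsto (fun N : ℕ => 1 / √(N : ℝ)) atTop (𝓝 0) :=
  (Real.tendsto_sqrt_atTop.comp tendsto_natCast_atTop_atTop).const_div_atTop 1

theorem tendsto_natSqrt_succ_div_sqrt :
    Tendsto (fun N : ℕ => ((N.sqrt + 1 : ℕ) : ℝ) / √N) atTop (𝓝 1) := by
  simpa [add_div] using tendsto_natSqrt_div_sqrt.add tendsto_inv_sqrt_natCast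

theorem tendsto_card_filter_dvd_div_div_sqrt {q : ℕ} (hq : 0 < q) :
    Tendsto (fun N : ℕ => (#{n ∈ range (N.sqrt + 1) | q ∣ N / (n + 1)} : ℝ) / √N) atTop
      (𝓝 (1 / q)) := by
  classical
  have hq' : (0 : ℝ) < q := by exact_mod_cast hq
  have hX : Tendsto (fun N : ℕ => (N : ℝ) / ((N.sqrt + 1 : ℕ) : ℝ) ^ 2) atTop (𝓝 1) := by
    have := (tendsto_natSqrt_succ_div_sqrt.pow 2).inv₀ (by simp)
    simp only [div_pow, inv_div, one_pow, inv_one] at this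
    refine this.congr fun N => ?_
    rw [Real.sq_sqrt (Nat.cast_nonneg _)]
  obtain ⟨ε, hε⟩ : ∃ ε : ℝ, ε = (2 * q : ℝ)⁻¹ := ⟨_, rfl⟩
  have hε0 : 0 ≤ ε := by rw [hε]; positivity
  have hε2 : 2 * ε = 1 / q := by rw [hε]; field_simp
  have h₁ := ball_subset_image_Ico ε
  have h₂ := image_Ico_subset_closedBall ε
  have hε1 : 2 * ε ≤ 1 := by
    rw [hε2, div_le_one hq']; exact_mod_cast hq
  have h := tendsto_card_filter_mem_div (M := fun N => N.sqrt + 1)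
    (y := fun N n => (((N / (n + 1 : ℕ) : ℝ) / q : ℝ) : UnitAddCircle)) (fun _ => Nat.succ_pos _)
    (fun k hk => ?_) (measure_frontier_eq_zero_of_ball_subset_subset_closedBall h₁ h₂)
  · rw [measureReal_eq_of_ball_subset_subset_closedBall hε0 hε1 h₁ h₂, hε2] at h
    have hmem := coe_div_mem_image_Ico_iff hq
    rw [← hε, hε2] at hmem
    have h' := h.mul tendsto_natSqrt_succ_div_sqrt
    rw [mul_one] at h'
    refine h'.congr fun N => ?_
    rw [div_mul_div_cancel₀ (by positivity), Finset.filter_congr fun n _ => hmem N (n + 1)]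
  · have hc : (k / q : ℝ) ≠ 0 := div_ne_zero (by exact_mod_cast hk) hq'.ne'
    refine (tendsto_average_fourierChar_div tendsto_sqrt_succ_atTop hX hc).congr fun N => ?_
    congr 1
    refine Finset.sum_congr rfl fun n _ => ?_
    rw [fourier_coe_apply, Real.fourierChar_apply]
    congr 1
    push_cast
    ring

theorem tendsto_sqrt_div_div_sqrt {q : ℕ} (hq : 0 < q) :
    Tendsto (fun N : ℕ => ((N.sqrt / q : ℕ) : ℝ) / √N) atTop (𝓝 (1 / q)) := by
  have hq' : (0 : ℝ) < q := by exact_mod_cast hq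
  have h := ((tendsto_nat_floor_mul_div_atTop (inv_nonneg.2 hq'.le)).comp
    (Real.tendsto_sqrt_atTop.comp (tendsto_natCast_atTop_atTop (R := ℝ))))
  rw [← one_div] at h
  refine h.congr fun N => ?_
  simp only [Function.comp_apply]
  rw [one_div_mul_eq_div, Nat.floor_div_natCast, Real.nat_floor_real_sqrt_eq_nat_sqrt]

theorem tendsto_card_filter_dvd_image_div {q : ℕ} (hq : 0 < q) :
    Tendsto (fun N : ℕ => (#{m ∈ (Icc 1 N).image (N / ·) | q ∣ m} : ℝ) / √N) atTop
      (𝓝 (2 / q)) := by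
  have hAB := (tendsto_card_filter_dvd_div_div_sqrt hq).add (tendsto_sqrt_div_div_sqrt hq)
  rw [← add_div, one_add_one_eq_two] at hAB
  have hlow := hAB.sub (tendsto_inv_sqrt_natCast.const_mul 2)
  rw [mul_zero, sub_zero] at hlow
  refine tendsto_of_tendsto_of_tendsto_of_le_of_le hlow hAB (fun N => ?_) (fun N => ?_)
  · have : (_ : ℝ) ≤ _ := Nat.cast_le.2 (le_card_filter_dvd_image_div q N)
    push_cast at this
    simp only
    rw [← add_div, mul_one_div, ← sub_div]
    gcongr
    linarith
  · have : (_ : ℝ) ≤ _ := Nat.cast_le.2 (card_filter_dvd_image_div_le q N)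
    push_cast at this
    simp only
    rw [← add_div]
    gcongr

end

open Filter in
theorem heyman_conjecture (q : ℕ) (hq : 0 < q) :
    Tendsto (fun x : ℝ =>
        ((((Finset.Icc 1 ⌊x⌋₊).image (fun n : ℕ => ⌊x / (n : ℝ)⌋₊)).filter
            (fun m : ℕ => q ∣ m)).card : ℝ) / (2 * Real.sqrt x / q))
      atTop (nhds 1) := by
  have hq' : (0 : ℝ) < q := by exact_mod_cast hq
  have hs : Tendsto (fun x : ℝ => √(⌊x⌋₊ : ℝ) / √x) atTop (nhds 1) := by
    have := (tendsto_nat_floor_div_atTop (R := ℝ)).sqrt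
    simpa using this
  have h := (((tendsto_card_filter_dvd_image_div hq).comp
    (tendsto_nat_floor_atTop (α := ℝ))).mul hs).mul_const ((q : ℝ) / 2)
  have e : (2 / q : ℝ) * 1 * (q / 2) = 1 := by field_simp
  rw [e] at h
  refine h.congr' ?_
  filter_upwards [eventually_ge_atTop 1] with x hx
  have h0 : 0 < √(⌊x⌋₊ : ℝ) := Real.sqrt_pos.2 (by exact_mod_cast Nat.floor_pos.2 hx)
  simp only [Function.comp_apply, Nat.floor_div_natCast]
  rw [div_mul_div_cancel₀ h0.ne']
  have h1 : √x ≠ 0 := (Real.sqrt_pos.2 (by linarith)).ne'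
  field_simp
end

section
/- For a fixed positive integer q, the density of the floor-value set restricted to any residue class a mod q (1 ≤ a ≤ q) is asymptotically independent of a: S(x;q,a) / S(x) → 1/q as x → ∞. -/
open Filter Topology MeasureTheory

/-- The basic averaging step of the van der Corput method: shifting a sum of `M` terms of modulus at
most one by `h < H` changes it by `O(H)`. -/
theorem mul_norm_sum_range_le_sum_norm_sum_shift (v : ℕ → ℂ) (hv : ∀ n, ‖v n‖ ≤ 1) (M H : ℕ) :
    (H : ℝ) * ‖∑ i ∈ Finset.range M, v i‖ ≤
      ∑ i ∈ Finset.range M, ‖∑ h ∈ Finset.range H, v (i + h)‖ + 2 * H ^ 2 := by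
  have key : ∀ h ∈ Finset.range H,
      ‖(∑ i ∈ Finset.range M, v i) - ∑ i ∈ Finset.range M, v (i + h)‖ ≤ 2 * H := by
    intro h hh
    have h1 := Finset.sum_range_add v M h
    have h2 := Finset.sum_range_add v h M
    rw [add_comm h M] at h2
    have h3 : (∑ i ∈ Finset.range M, v i) - ∑ i ∈ Finset.range M, v (i + h) =
        (∑ i ∈ Finset.range h, v i) - ∑ i ∈ Finset.range h, v (M + i) := by
      simp only [add_comm _ h]
      linear_combination h2 - h1
    have hb : ∀ w : ℕ → ℂ, (∀ n, ‖w n‖ ≤ 1) → ‖∑ i ∈ Finset.range h, w i‖ ≤ h := fun w hw => by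
      simpa using norm_sum_le_of_le (Finset.range h) (fun i _ => hw i)
    have hhH : (h : ℝ) ≤ H := by exact_mod_cast (Finset.mem_range.1 hh).le
    rw [h3]
    linarith [norm_sub_le (∑ i ∈ Finset.range h, v i) (∑ i ∈ Finset.range h, v (M + i)),
      hb v hv, hb (fun i => v (M + i)) (fun n => hv _)]
  have h4 : (H : ℂ) * ∑ i ∈ Finset.range M, v i =
      ∑ i ∈ Finset.range M, ∑ h ∈ Finset.range H, v (i + h) +
      ∑ h ∈ Finset.range H,
        ((∑ i ∈ Finset.range M, v i) - ∑ i ∈ Finset.range M, v (i + h)) := by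
    rw [Finset.sum_comm, ← Finset.sum_add_distrib]
    simp
  calc (H : ℝ) * ‖∑ i ∈ Finset.range M, v i‖ = ‖(H : ℂ) * ∑ i ∈ Finset.range M, v i‖ := by simp
    _ ≤ _ := by
      rw [h4]
      refine (norm_add_le _ _).trans (add_le_add (norm_sum_le _ _) ?_)
      refine (norm_sum_le_of_le _ key).trans (le_of_eq ?_)
      simp
      ring

/-- A sum over `i < M` as an integral of a step function over the unit interval. -/
theorem sum_range_eq_mul_integral_ceil (φ : ℕ → ℝ) (M : ℕ) (hM : 0 < M) :
    ∑ i ∈ Finset.range M, φ (i + 1) = M * ∫ t in (0 : ℝ)..1, φ ⌈t * M⌉₊ := by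
  have hM' : (M : ℝ) ≠ 0 := by positivity
  have hcongr : ∀ k : ℕ, Set.EqOn (fun _ : ℝ => φ (k + 1)) (fun s => φ ⌈s⌉₊)
      (Set.uIoc (k : ℝ) ((k + 1 : ℕ) : ℝ)) := by
    intro k s hs
    rw [Set.uIoc_of_le (by simp)] at hs
    have : ⌈s⌉₊ = k + 1 := by
      rw [Nat.ceil_eq_iff (by simp)]
      simpa using hs
    simp [this]
  have hint := intervalIntegral.sum_integral_adjacent_intervals (μ := volume)
    (f := fun s : ℝ => φ ⌈s⌉₊) (a := fun k : ℕ => (k : ℝ)) (n := M)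
    (fun k _ => (intervalIntegrable_const (c := φ (k + 1))).congr (hcongr k))
  rw [intervalIntegral.integral_comp_mul_right (fun s => φ ⌈s⌉₊) hM']
  simp only [zero_mul, one_mul, smul_eq_mul]
  rw [mul_inv_cancel_left₀ hM', ← Nat.cast_zero (R := ℝ), ← hint]
  refine Finset.sum_congr rfl fun k _ => ?_
  rw [← intervalIntegral.integral_congr_ae (Eventually.of_forall fun s hs => hcongr k hs)]
  simp

/-- Averages of powers of a unit complex number `z ≠ 1` tend to zero. -/
theorem tendsto_norm_sum_pow_div_atTop_zero {z : ℂ} (hz : ‖z‖ = 1) (hz1 : z ≠ 1) :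
    Tendsto (fun H : ℕ => ‖∑ h ∈ Finset.range H, z ^ h‖ / H) atTop (𝓝 0) := by
  have h0 : 0 < ‖z - 1‖ := norm_pos_iff.2 (sub_ne_zero.2 hz1)
  refine squeeze_zero (fun H => by positivity) (fun H => ?_)
    (tendsto_const_div_atTop_nhds_zero_nat (2 / ‖z - 1‖))
  gcongr
  rw [geom_sum_eq hz1, norm_div]
  gcongr
  refine (norm_sub_le _ _).trans ?_
  simp [hz]
  norm_num

/-- The Weyl criterion for triangular arrays on the circle. -/
theorem tendsto_average_of_tendsto_average_fourier {T : ℝ} [hT : Fact (0 < T)] (M : ℕ → ℕ)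
    (hM : ∀ᶠ N in atTop, 0 < M N) (x : ℕ → ℕ → AddCircle T)
    (hx : ∀ k : ℤ, k ≠ 0 → Tendsto
      (fun N => (∑ i ∈ Finset.range (M N), fourier k (x N i)) / (M N : ℂ)) atTop (𝓝 0))
    (f : C(AddCircle T, ℂ)) :
    Tendsto (fun N => (∑ i ∈ Finset.range (M N), f (x N i)) / (M N : ℂ)) atTop
      (𝓝 (∫ y, f y ∂AddCircle.haarAddCircle)) := by
  have hint : ∀ g : C(AddCircle T, ℂ), Integrable g AddCircle.haarAddCircle := fun g =>
    g.continuous.integrable_of_hasCompactSupport (HasCompactSupport.of_compactSpace g)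
  have hspan : ∀ g ∈ Submodule.span ℂ (Set.range (@fourier T)),
      Tendsto (fun N => (∑ i ∈ Finset.range (M N), g (x N i)) / (M N : ℂ)) atTop
        (𝓝 (∫ y, g y ∂AddCircle.haarAddCircle)) := by
    intro g hg
    induction hg using Submodule.span_induction with
    | mem g hg =>
      obtain ⟨k, rfl⟩ := hg
      have hk := congrFun (fourierCoeff_fourier (T := T) k) 0
      simp only [fourierCoeff, neg_zero, fourier_zero, one_smul] at hk
      rw [hk]
      rcases eq_or_ne k 0 with rfl | hk0
      · refine tendsto_const_nhds.congr' ?_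
        filter_upwards [hM] with N hN
        have : (M N : ℂ) ≠ 0 := by exact_mod_cast hN.ne'
        simp [this]
      · simpa [Pi.single_apply, hk0, hk0.symm] using hx k hk0
    | zero => simp
    | add g₁ g₂ _ _ h₁ h₂ =>
      simp only [ContinuousMap.add_apply, Finset.sum_add_distrib, add_div]
      rw [integral_add (hint g₁) (hint g₂)]
      exact h₁.add h₂
    | smul c g _ h =>
      simp only [ContinuousMap.smul_apply, smul_eq_mul, ← Finset.mul_sum, mul_div_assoc]
      rw [integral_const_mul]
      exact h.const_mul c
  have hf : f ∈ closure (Submodule.span ℂ (Set.range (@fourier T)) : Set C(AddCircle T, ℂ)) := by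
    have := span_fourier_closure_eq_top (T := T)
    rw [← Submodule.topologicalClosure_coe, this]
    trivial
  rw [Metric.tendsto_nhds]
  intro ε hε
  obtain ⟨g, hg, hfg⟩ := Metric.mem_closure_iff.1 hf (ε / 3) (by positivity)
  have hpt : ∀ y, ‖f y - g y‖ ≤ ε / 3 := fun y => by
    rw [← dist_eq_norm]
    exact (ContinuousMap.dist_apply_le_dist y).trans hfg.le
  have hI : dist (∫ y, g y ∂AddCircle.haarAddCircle) (∫ y, f y ∂AddCircle.haarAddCircle)
      ≤ ε / 3 := by
    rw [dist_comm, dist_eq_norm, ← integral_sub (hint f) (hint g)]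
    simpa using norm_integral_le_of_norm_le_const (μ := AddCircle.haarAddCircle)
      (Eventually.of_forall hpt)
  filter_upwards [Metric.tendsto_nhds.1 (hspan g hg) (ε / 3) (by positivity), hM] with N hN hMN
  have hA : dist ((∑ i ∈ Finset.range (M N), f (x N i)) / (M N : ℂ))
      ((∑ i ∈ Finset.range (M N), g (x N i)) / (M N : ℂ)) ≤ ε / 3 := by
    have hM0 : (0 : ℝ) < M N := by exact_mod_cast hMN
    rw [dist_eq_norm, ← sub_div, ← Finset.sum_sub_distrib, norm_div, Complex.norm_natCast,
      div_le_iff₀ hM0]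
    refine (norm_sum_le_of_le _ fun i _ => hpt (x N i)).trans (le_of_eq ?_)
    simp
    ring
  linarith [dist_triangle4 ((∑ i ∈ Finset.range (M N), f (x N i)) / (M N : ℂ))
    ((∑ i ∈ Finset.range (M N), g (x N i)) / (M N : ℂ)) (∫ y, g y ∂AddCircle.haarAddCircle)
    (∫ y, f y ∂AddCircle.haarAddCircle)]

/-- Combinatorial description of the floor-value set of `N`, filtered by a predicate, in terms of
the values at most `√N` and the values `N / n` with `n ≤ √N`. -/
theorem card_filter_image_div_add (N : ℕ) (p : ℕ → Prop) [DecidablePred p] :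
    ∃ δ ≤ 1, (((Finset.Icc 1 N).image (fun n => N / n)).filter p).card + δ =
      ((Finset.Icc 1 N.sqrt).filter p).card +
        ((Finset.Icc 1 N.sqrt).filter (fun n => p (N / n))).card := by
  have hs : N.sqrt * N.sqrt ≤ N := Nat.sqrt_le N
  have hs' : N < (N.sqrt + 1) * (N.sqrt + 1) := Nat.lt_succ_sqrt N
  set M := N.sqrt with hMdef
  have hle : ∀ n ∈ Finset.Icc 1 M, M ≤ N / n := by
    intro n hn
    rw [Finset.mem_Icc] at hn
    rw [Nat.le_div_iff_mul_le (by omega)]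
    nlinarith
  have hinv : ∀ n ∈ Finset.Icc 1 M, N / (N / n) = n := by
    intro n hn
    have h1 := hle n hn
    rw [Finset.mem_Icc] at hn
    have h2 := Nat.div_add_mod N n
    have h3 := Nat.mod_lt N (show n > 0 by omega)
    rw [Nat.div_eq_iff (by omega)]
    generalize n * (N / n) = w at *
    omega
  have hinj : Set.InjOn (fun n => N / n) (Finset.Icc 1 M : Finset ℕ) := by
    intro n hn m hm h
    rw [← hinv n hn, ← hinv m hm]
    exact congrArg (N / ·) h
  have himg : (Finset.Icc 1 N).image (fun n => N / n) =
      Finset.Icc 1 M ∪ (Finset.Icc 1 M).image (fun n => N / n) := by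
    ext m
    simp only [Finset.mem_union, Finset.mem_image]
    constructor
    · rintro ⟨n, hn, rfl⟩
      rcases le_or_gt n M with h | h
      · exact Or.inr ⟨n, by simp_all, rfl⟩
      · left
        rw [Finset.mem_Icc] at hn ⊢
        refine ⟨Nat.div_pos hn.2 hn.1, ?_⟩
        rw [← Nat.lt_succ_iff, Nat.div_lt_iff_lt_mul (by omega)]
        nlinarith
    · rintro (h | ⟨n, hn, rfl⟩)
      · refine ⟨N / m, ?_, hinv m h⟩
        have := hle m h
        rw [Finset.mem_Icc] at h ⊢
        exact ⟨by omega, Nat.div_le_self _ _⟩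
      · refine ⟨n, ?_, rfl⟩
        rw [Finset.mem_Icc] at hn ⊢
        exact ⟨hn.1, by nlinarith⟩
  refine ⟨((Finset.Icc 1 M).filter p ∩ ((Finset.Icc 1 M).image (fun n => N / n)).filter p).card,
    ?_, ?_⟩
  · rw [Finset.card_le_one_iff_subset_singleton]
    refine ⟨M, fun m hm => ?_⟩
    simp only [Finset.mem_inter, Finset.mem_filter, Finset.mem_image] at hm
    obtain ⟨⟨h1, -⟩, ⟨n, hn, rfl⟩, -⟩ := hm
    rw [Finset.mem_singleton]
    exact le_antisymm (Finset.mem_Icc.1 h1).2 (hle n hn)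
  · rw [himg, Finset.filter_union, Finset.card_union_add_card_inter, Finset.filter_image,
      Finset.card_image_of_injOn]
    exact hinj.mono (Finset.coe_subset.2 (Finset.filter_subset _ _))

theorem tendsto_natSqrt_atTop : Tendsto Nat.sqrt atTop atTop :=
  tendsto_atTop.2 fun b => (eventually_ge_atTop (b * b)).mono fun _ hN => Nat.le_sqrt.2 hN

theorem tendsto_div_natSqrt_sq :
    Tendsto (fun N : ℕ => (N : ℝ) / (N.sqrt : ℝ) ^ 2) atTop (𝓝 1) := by
  have h2 : Tendsto (fun N : ℕ => 1 + 2 / (N.sqrt : ℝ)) atTop (𝓝 1) := by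
    simpa using ((tendsto_const_div_atTop_nhds_zero_nat (2 : ℝ)).comp
      tendsto_natSqrt_atTop).const_add 1
  refine tendsto_of_tendsto_of_tendsto_of_le_of_le' tendsto_const_nhds h2 ?_ ?_
  all_goals
    filter_upwards [tendsto_natSqrt_atTop.eventually_gt_atTop 0] with N hN
    have hM : (0 : ℝ) < N.sqrt := by exact_mod_cast hN
  · rw [le_div_iff₀ (by positivity)]
    have : (N.sqrt : ℝ) ^ 2 ≤ N := by exact_mod_cast Nat.sqrt_le' N
    linarith
  · rw [div_le_iff₀ (by positivity)]
    have h3 : (N : ℝ) ≤ N.sqrt * N.sqrt + N.sqrt + N.sqrt := by exact_mod_cast Nat.sqrt_le_add N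
    refine h3.trans (le_of_eq ?_)
    field_simp
    ring

/-- The phase increments of `n ↦ N / n` at `n ≈ t √N` are asymptotically linear. -/
theorem tendsto_div_add_sub_div {t : ℝ} (ht : 0 < t) (h : ℕ) :
    Tendsto (fun N : ℕ => (N : ℝ) / ((⌈t * N.sqrt⌉₊ + h : ℕ) : ℝ) - (N : ℝ) / (⌈t * N.sqrt⌉₊ : ℝ))
      atTop (𝓝 (-(h / t ^ 2))) := by
  have hM := tendsto_natCast_atTop_atTop (R := ℝ) |>.comp tendsto_natSqrt_atTop
  have h1 : Tendsto (fun N : ℕ => (⌈t * N.sqrt⌉₊ : ℝ) / N.sqrt) atTop (𝓝 t) :=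
    (tendsto_nat_ceil_mul_div_atTop ht.le).comp hM
  have h2 : Tendsto (fun N : ℕ => (h : ℝ) / N.sqrt) atTop (𝓝 0) :=
    (tendsto_const_div_atTop_nhds_zero_nat (h : ℝ)).comp tendsto_natSqrt_atTop
  have h3 := ((tendsto_div_natSqrt_sq.const_mul (h : ℝ)).div (h1.mul (h1.add h2))
    (by positivity)).neg
  have he : -((h : ℝ) * 1 / (t * (t + 0))) = -(h / t ^ 2) := by ring
  rw [he] at h3
  refine h3.congr' ?_
  filter_upwards [tendsto_natSqrt_atTop.eventually_gt_atTop 0] with N hN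
  have hM : (0 : ℝ) < N.sqrt := by exact_mod_cast hN
  have hn : (0 : ℝ) < (⌈t * N.sqrt⌉₊ : ℝ) := by
    exact_mod_cast Nat.ceil_pos.2 (by positivity)
  push_cast
  simp only [Pi.div_apply]
  field_simp
  ring

theorem norm_sum_exp_eq_norm_sum_exp_sub (c : ℝ) (y : ℕ → ℝ) (y₀ : ℝ) (H : ℕ) :
    ‖∑ h ∈ Finset.range H, Complex.exp ((c * y h : ℝ) * Complex.I)‖ =
      ‖∑ h ∈ Finset.range H, Complex.exp ((c * (y h - y₀) : ℝ) * Complex.I)‖ := by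
  have : ∑ h ∈ Finset.range H, Complex.exp ((c * y h : ℝ) * Complex.I) =
      Complex.exp ((c * y₀ : ℝ) * Complex.I) *
        ∑ h ∈ Finset.range H, Complex.exp ((c * (y h - y₀) : ℝ) * Complex.I) := by
    rw [Finset.mul_sum]
    refine Finset.sum_congr rfl fun h _ => ?_
    rw [← Complex.exp_add]
    congr 1
    push_cast
    ring
  rw [this, norm_mul, Complex.norm_exp_ofReal_mul_I, one_mul]

theorem norm_sum_exp_div_le_one (y : ℕ → ℝ) (H : ℕ) :
    ‖∑ h ∈ Finset.range H, Complex.exp ((y h : ℝ) * Complex.I)‖ / H ≤ 1 := by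
  refine div_le_one_of_le₀ ?_ (by positivity)
  refine (norm_sum_le_of_le (Finset.range H)
    fun h _ => (Complex.norm_exp_ofReal_mul_I (y h)).le).trans (le_of_eq ?_)
  simp

/-- The limiting local averages have small integral for long windows. -/
theorem tendsto_integral_norm_sum_exp_div {c : ℝ} (hc : c ≠ 0) :
    Tendsto (fun H : ℕ => ∫ t in (0 : ℝ)..1,
      ‖∑ h ∈ Finset.range H, Complex.exp ((c * -(h / t ^ 2) : ℝ) * Complex.I)‖ / H)
      atTop (𝓝 0) := by
  have hcount : (Set.range fun j : ℤ => √(-c / (j * (2 * Real.pi)))).Countable :=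
    Set.countable_range _
  have hae : ∀ᵐ t : ℝ, t ∉ Set.range fun j : ℤ => √(-c / (j * (2 * Real.pi))) :=
    hcount.ae_notMem volume
  have := intervalIntegral.tendsto_integral_filter_of_dominated_convergence
    (μ := volume) (a := (0 : ℝ)) (b := 1) (l := atTop) (f := fun _ => (0 : ℝ))
    (F := fun (H : ℕ) (t : ℝ) =>
      ‖∑ h ∈ Finset.range H, Complex.exp ((c * -(h / t ^ 2) : ℝ) * Complex.I)‖ / H)
    (fun _ => 1) ?_ ?_ ?_ ?_
  · simpa using this
  · refine Eventually.of_forall fun H => Measurable.aestronglyMeasurable ?_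
    fun_prop
  · refine Eventually.of_forall fun H => Eventually.of_forall fun t _ => ?_
    rw [Real.norm_of_nonneg (by positivity)]
    exact norm_sum_exp_div_le_one (fun h => c * -(h / t ^ 2)) H
  · simp
  · filter_upwards [hae] with t ht ht01
    rw [Set.uIoc_of_le zero_le_one] at ht01
    have ht0 : 0 < t := ht01.1
    have hz1 : Complex.exp ((-c / t ^ 2 : ℝ) * Complex.I) ≠ 1 := by
      intro h
      obtain ⟨j, hj⟩ := Complex.exp_eq_one_iff.1 h
      have hj' : -c / t ^ 2 = j * (2 * Real.pi) := by
        have := congrArg Complex.im hj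
        simpa [-Complex.ofReal_div, -Complex.ofReal_neg, -Complex.ofReal_pow] using this
      refine ht ⟨j, ?_⟩
      have : -c / (-c / t ^ 2) = t ^ 2 := by field_simp
      simp only [← hj', this, Real.sqrt_sq ht0.le]
    refine (tendsto_norm_sum_pow_div_atTop_zero (Complex.norm_exp_ofReal_mul_I _) hz1).congr
      fun H => ?_
    congr 2
    refine Finset.sum_congr rfl fun h _ => ?_
    rw [← Complex.exp_nat_mul]
    congr 1
    push_cast
    ring

/-- Cancellation in the exponential sums `∑ e(c N / n)` over `n ≤ √N`. -/
theorem tendsto_sum_exp_div_natSqrt {c : ℝ} (hc : c ≠ 0) :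
    Tendsto (fun N : ℕ => (∑ i ∈ Finset.range N.sqrt,
      Complex.exp ((c * (N / ((i + 1 : ℕ) : ℝ)) : ℝ) * Complex.I)) / (N.sqrt : ℂ))
      atTop (𝓝 0) := by
  have hlocal : ∀ H : ℕ, Tendsto (fun N : ℕ => ∫ t in (0 : ℝ)..1,
      ‖∑ h ∈ Finset.range H, Complex.exp
        ((c * (N / ((⌈t * N.sqrt⌉₊ + h : ℕ) : ℝ)) : ℝ) * Complex.I)‖ / H) atTop
      (𝓝 (∫ t in (0 : ℝ)..1,
      ‖∑ h ∈ Finset.range H, Complex.exp ((c * -(h / t ^ 2) : ℝ) * Complex.I)‖ / H)) := by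
    intro H
    refine intervalIntegral.tendsto_integral_filter_of_dominated_convergence
      (fun _ => 1) ?_ ?_ ?_ ?_
    · refine Eventually.of_forall fun N => Measurable.aestronglyMeasurable ?_
      exact (measurable_from_nat (f := fun n : ℕ => ‖∑ h ∈ Finset.range H, Complex.exp
        ((c * (N / ((n + h : ℕ) : ℝ)) : ℝ) * Complex.I)‖ / H)).comp
        (Nat.measurable_ceil.comp (measurable_id.mul_const _))
    · refine Eventually.of_forall fun N => Eventually.of_forall fun t _ => ?_
      rw [Real.norm_of_nonneg (by positivity)]
      exact norm_sum_exp_div_le_one (fun h => c * (N / ((⌈t * N.sqrt⌉₊ + h : ℕ) : ℝ))) H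
    · simp
    · refine Eventually.of_forall fun t ht => ?_
      rw [Set.uIoc_of_le zero_le_one] at ht
      simp only [fun N : ℕ => norm_sum_exp_eq_norm_sum_exp_sub c
        (fun h => N / ((⌈t * N.sqrt⌉₊ + h : ℕ) : ℝ)) (N / (⌈t * N.sqrt⌉₊ : ℝ)) H]
      refine Tendsto.div_const (Tendsto.norm (tendsto_finsetSum _ fun h _ => ?_)) _
      have hcont : Continuous fun s : ℝ => Complex.exp ((c * s : ℝ) * Complex.I) := by fun_prop
      exact (hcont.tendsto _).comp (tendsto_div_add_sub_div ht.1 h)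
  rw [Metric.tendsto_nhds]
  intro ε hε
  obtain ⟨H, hH, hH0⟩ := (((tendsto_integral_norm_sum_exp_div hc).eventually
    (gt_mem_nhds (half_pos hε))).and (eventually_gt_atTop 0)).exists
  have herr : Tendsto (fun N : ℕ => 2 * (H : ℝ) / N.sqrt) atTop (𝓝 0) :=
    (tendsto_const_div_atTop_nhds_zero_nat (2 * (H : ℝ))).comp tendsto_natSqrt_atTop
  filter_upwards [(hlocal H).eventually (gt_mem_nhds hH),
    herr.eventually (gt_mem_nhds (half_pos hε)),
    tendsto_natSqrt_atTop.eventually_gt_atTop 0] with N h1 h2 hN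
  have hM : (0 : ℝ) < N.sqrt := by exact_mod_cast hN
  have hHr : (0 : ℝ) < H := by exact_mod_cast hH0
  have hA := mul_norm_sum_range_le_sum_norm_sum_shift
    (fun i => Complex.exp ((c * (N / ((i + 1 : ℕ) : ℝ)) : ℝ) * Complex.I))
    (fun n => (Complex.norm_exp_ofReal_mul_I _).le) N.sqrt H
  have hB := sum_range_eq_mul_integral_ceil (fun n => ‖∑ h ∈ Finset.range H, Complex.exp
    ((c * (N / ((n + h : ℕ) : ℝ)) : ℝ) * Complex.I)‖ / H) N.sqrt hN
  simp only [← Finset.sum_div, add_right_comm _ 1] at hB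
  rw [div_eq_iff hHr.ne'] at hB
  simp only [hB] at hA
  rw [dist_zero_right, norm_div, Complex.norm_natCast, div_lt_iff₀ hM]
  rw [div_lt_iff₀ hM] at h2
  refine lt_of_mul_lt_mul_left (hA.trans_lt ?_) hHr.le
  nlinarith [mul_lt_mul_of_pos_left h1 (mul_pos hM hHr), mul_lt_mul_of_pos_left h2 hHr]

/-- If the integer part of `y` is `a` modulo `q`, then `y` lies in the arc `[a, a + 1]` of the
circle of length `q`. -/
theorem dist_coe_addCircle_le_half {q a : ℕ} {y : ℝ} (hy : 0 ≤ y) (h : ⌊y⌋₊ % q = a % q) :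
    dist (y : AddCircle (q : ℝ)) ((a + 1 / 2 : ℝ) : AddCircle (q : ℝ)) ≤ 1 / 2 := by
  obtain ⟨z, hz⟩ := (Nat.modEq_iff_dvd.1 h : (q : ℤ) ∣ (a : ℤ) - (⌊y⌋₊ : ℤ))
  have hz' : (a : ℝ) - (⌊y⌋₊ : ℝ) = q * z := by exact_mod_cast hz
  have hcoe : ((y - (a + 1 / 2) : ℝ) : AddCircle (q : ℝ)) =
      ((y - ⌊y⌋₊ - 1 / 2 : ℝ) : AddCircle (q : ℝ)) := by
    rw [← sub_eq_zero, ← AddCircle.coe_sub, AddCircle.coe_eq_zero_iff]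
    refine ⟨-z, ?_⟩
    rw [zsmul_eq_mul]
    push_cast
    linarith
  rw [dist_eq_norm, ← AddCircle.coe_sub, hcoe]
  refine (QuotientAddGroup.norm_mk_le_norm (S := AddSubgroup.zmultiples (q : ℝ))).trans ?_
  rw [Real.norm_eq_abs, abs_le]
  constructor <;> linarith [Nat.floor_le hy, Nat.lt_floor_add_one y]

/-- A continuous majorant of a unit arc of the circle with almost the same integral. -/
theorem exists_continuous_majorant_unit_arc {T : ℝ} [hT : Fact (0 < T)] (c : AddCircle T) {ε : ℝ}
    (hε : 0 < ε) : ∃ f : C(AddCircle T, ℝ), (∀ y, 0 ≤ f y) ∧ (∀ y, dist y c ≤ 1 / 2 → f y = 1) ∧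
      ∫ y, f y ∂AddCircle.haarAddCircle ≤ (1 + 2 * ε) / T := by
  let f : C(AddCircle T, ℝ) :=
    ⟨fun y => max 0 (min 1 (1 + (1 / 2 - dist y c) / ε)), by fun_prop⟩
  have hf : ∀ y, f y = max 0 (min 1 (1 + (1 / 2 - dist y c) / ε)) := fun y => rfl
  refine ⟨f, fun y => le_max_left _ _, fun y hy => ?_, ?_⟩
  · have : 0 ≤ (1 / 2 - dist y c) / ε := div_nonneg (by linarith) hε.le
    rw [hf, min_eq_left (by linarith), max_eq_right zero_le_one]
  · have hle : ∀ y, f y ≤ (Metric.closedBall c (1 / 2 + ε)).indicator (fun _ => (1 : ℝ)) y := by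
      intro y
      rw [hf]
      by_cases hy : y ∈ Metric.closedBall c (1 / 2 + ε)
      · rw [Set.indicator_of_mem hy]
        exact max_le zero_le_one (min_le_left _ _)
      · rw [Set.indicator_of_notMem hy]
        rw [Metric.mem_closedBall, not_le] at hy
        refine max_le le_rfl ((min_le_right _ _).trans ?_)
        have : (1 / 2 - dist y c) / ε ≤ -1 := by
          rw [div_le_iff₀ hε]
          linarith
        linarith
    rw [AddCircle.integral_haarAddCircle, smul_eq_mul, inv_mul_eq_div]
    refine div_le_div_of_nonneg_right ?_ hT.out.le
    calc ∫ y, f y ≤ ∫ y, (Metric.closedBall c (1 / 2 + ε)).indicator (fun _ => (1 : ℝ)) y := by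
          refine integral_mono ?_ ?_ hle
          · exact f.continuous.integrable_of_hasCompactSupport (HasCompactSupport.of_compactSpace f)
          · exact (integrable_const 1).indicator measurableSet_closedBall
      _ = (volume (Metric.closedBall c (1 / 2 + ε))).toReal := by
          rw [integral_indicator_const _ measurableSet_closedBall]
          simp [Measure.real]
      _ ≤ 1 + 2 * ε := by
          rw [AddCircle.volume_closedBall]
          refine ENNReal.toReal_le_of_le_ofReal (by positivity) (ENNReal.ofReal_le_ofReal ?_)
          exact (min_le_right _ _).trans (by linarith)

theorem eventually_card_filter_div_mod_le {q : ℕ} (hq : 1 ≤ q) (a : ℕ) {ε : ℝ} (hε : 0 < ε) :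
    ∀ᶠ N : ℕ in atTop, (((Finset.Icc 1 N.sqrt).filter (fun n => N / n % q = a % q)).card : ℝ) ≤
      (1 / q + ε) * N.sqrt := by
  have hq0 : (0 : ℝ) < q := by exact_mod_cast hq
  have : Fact ((0 : ℝ) < q) := ⟨hq0⟩
  obtain ⟨f, hf0, hf1, hfI⟩ := exists_continuous_majorant_unit_arc
    ((a + 1 / 2 : ℝ) : AddCircle (q : ℝ)) (ε := ε * q / 4) (by positivity)
  let F : C(AddCircle (q : ℝ), ℂ) := ⟨fun y => (f y : ℂ), by fun_prop⟩
  have hF : ∀ y, F y = (f y : ℂ) := fun y => rfl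
  have hlim := tendsto_average_of_tendsto_average_fourier Nat.sqrt
    (tendsto_natSqrt_atTop.eventually_gt_atTop 0)
    (fun N i => (((N : ℝ) / ((i + 1 : ℕ) : ℝ) : ℝ) : AddCircle (q : ℝ))) (fun k hk => ?_) F
  · have hre := (Complex.continuous_re.tendsto _).comp hlim
    simp only [hF, integral_complex_ofReal, Complex.ofReal_re] at hre
    have hlt : ∫ y, f y ∂AddCircle.haarAddCircle < 1 / q + ε := by
      refine hfI.trans_lt ?_
      rw [div_lt_iff₀ hq0, add_mul, one_div, inv_mul_cancel₀ hq0.ne']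
      nlinarith [mul_pos hε hq0]
    filter_upwards [hre.eventually (gt_mem_nhds hlt),
      tendsto_natSqrt_atTop.eventually_gt_atTop 0] with N hN hM
    have hM0 : (0 : ℝ) < N.sqrt := by exact_mod_cast hM
    have hcast : ((∑ i ∈ Finset.range N.sqrt,
        (f (((N : ℝ) / ((i + 1 : ℕ) : ℝ) : ℝ) : AddCircle (q : ℝ)) : ℂ)) / (N.sqrt : ℂ)).re =
        (∑ i ∈ Finset.range N.sqrt,
          f (((N : ℝ) / ((i + 1 : ℕ) : ℝ) : ℝ) : AddCircle (q : ℝ))) / N.sqrt := by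
      rw [← Complex.ofReal_sum, ← Complex.ofReal_natCast, ← Complex.ofReal_div, Complex.ofReal_re]
    simp only [Function.comp_apply] at hN
    rw [hcast, div_lt_iff₀ hM0] at hN
    refine le_trans ?_ hN.le
    rw [Finset.range_eq_Ico, Finset.sum_Ico_add' (fun n : ℕ =>
      f (((N : ℝ) / (n : ℝ) : ℝ) : AddCircle (q : ℝ))) 0 N.sqrt 1, zero_add,
      Finset.Ico_add_one_right_eq_Icc, Finset.card_filter, Nat.cast_sum]
    refine Finset.sum_le_sum fun n _ => ?_
    split_ifs with hn
    · rw [hf1 _ (dist_coe_addCircle_le_half (by positivity) (by rwa [Nat.floor_div_eq_div]))]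
      simp
    · simpa using hf0 _
  · have hk' : (k : ℝ) ≠ 0 := by exact_mod_cast hk
    have hc : 2 * Real.pi * k / q ≠ 0 := by positivity
    refine (tendsto_sum_exp_div_natSqrt hc).congr fun N => ?_
    congr 1
    refine Finset.sum_congr rfl fun i _ => ?_
    rw [fourier_coe_apply]
    congr 1
    push_cast
    ring

theorem sum_card_filter_mod_eq {q : ℕ} (hq : 1 ≤ q) (s : Finset ℕ) (g : ℕ → ℕ) :
    ∑ b ∈ Finset.range q, (s.filter (fun n => g n % q = b % q)).card = s.card := by
  rw [Finset.card_eq_sum_card_fiberwise (f := fun n => g n % q) (t := Finset.range q)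
    (fun n _ => Finset.mem_coe.2 (Finset.mem_range.2 (Nat.mod_lt _ hq)))]
  refine Finset.sum_congr rfl fun b hb => ?_
  rw [Nat.mod_eq_of_lt (Finset.mem_range.1 hb)]

theorem tendsto_card_filter_div_mod {q : ℕ} (hq : 1 ≤ q) (a : ℕ) :
    Tendsto (fun N : ℕ => (((Finset.Icc 1 N.sqrt).filter
      (fun n => N / n % q = a % q)).card : ℝ) / N.sqrt) atTop (𝓝 (1 / q)) := by
  have hq0 : (0 : ℝ) < q := by exact_mod_cast hq
  rw [Metric.tendsto_nhds]
  intro ε hε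
  have hall : ∀ᶠ N : ℕ in atTop, ∀ b ∈ Finset.range q,
      (((Finset.Icc 1 N.sqrt).filter (fun n => N / n % q = b % q)).card : ℝ) ≤
        (1 / q + ε / (2 * q)) * N.sqrt :=
    (Finset.eventually_all _).2 fun b _ =>
      eventually_card_filter_div_mod_le hq b (by positivity)
  filter_upwards [hall, tendsto_natSqrt_atTop.eventually_gt_atTop 0] with N hN hM
  have hM0 : (0 : ℝ) < N.sqrt := by exact_mod_cast hM
  have ha : a % q ∈ Finset.range q := Finset.mem_range.2 (Nat.mod_lt _ hq)
  have hup := hN _ ha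
  have hsum : ∑ b ∈ Finset.range q,
      (((Finset.Icc 1 N.sqrt).filter (fun n => N / n % q = b % q)).card : ℝ) = N.sqrt := by
    have := sum_card_filter_mod_eq hq (Finset.Icc 1 N.sqrt) (fun n => N / n)
    rw [Nat.card_Icc, Nat.add_sub_cancel] at this
    exact_mod_cast this
  rw [← Finset.add_sum_erase _ _ ha] at hsum
  have hrest := Finset.sum_le_sum (s := (Finset.range q).erase (a % q))
    fun b hb => hN b (Finset.mem_of_mem_erase hb)
  rw [Finset.sum_const, Finset.card_erase_of_mem ha, Finset.card_range, nsmul_eq_mul,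
    Nat.cast_sub hq, Nat.cast_one] at hrest
  simp only [Nat.mod_mod] at hup hsum
  have hε1 : ε / (2 * q) ≤ ε / 2 := by
    have : (1 : ℝ) ≤ q := by exact_mod_cast hq
    gcongr
    linarith
  have hexp : ((q : ℝ) - 1) * ((1 / q + ε / (2 * q)) * N.sqrt) =
      N.sqrt - 1 / q * N.sqrt + (ε / 2 - ε / (2 * q)) * N.sqrt := by
    field_simp
  rw [hexp] at hrest
  have h1 : ε / (2 * q) * N.sqrt ≤ ε / 2 * N.sqrt := by gcongr
  have h2 : 0 < ε / (2 * q) * N.sqrt := by positivity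
  have h3 : 0 < ε / 2 * N.sqrt := by positivity
  rw [Real.dist_eq, abs_lt, lt_sub_iff_add_lt, sub_lt_iff_lt_add, lt_div_iff₀ hM0,
    div_lt_iff₀ hM0]
  constructor <;> nlinarith

theorem tendsto_card_filter_mod {q : ℕ} (hq : 1 ≤ q) (a : ℕ) :
    Tendsto (fun M : ℕ => (((Finset.Icc 1 M).filter (fun n => n % q = a % q)).card : ℝ) / M)
      atTop (𝓝 (1 / q)) := by
  have hq0 : (0 : ℝ) < q := by exact_mod_cast hq
  have hbound : ∀ M : ℕ,
      |(((Finset.Icc 1 M).filter (fun n => n % q = a % q)).card : ℝ) - M / q| ≤ 1 := by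
    intro M
    have h : (((Finset.Ioc 0 M).filter (fun n => n % q = a % q)).card : ℤ) =
        max (⌊((M : ℚ) - a) / q⌋ - ⌊((0 : ℕ) - a : ℚ) / q⌋) 0 := by
      convert Nat.Ioc_filter_modEq_card 0 M hq a
      exact Iff.rfl
    have hQ : |(((Finset.Icc 1 M).filter (fun n => n % q = a % q)).card : ℚ) - M / q| ≤ 1 := by
      rw [← zero_add 1, Finset.Icc_add_one_left_eq_Ioc, ← Int.cast_natCast, h, Int.cast_max]
      push_cast
      have h1 := Int.floor_le ((M - a : ℚ) / q)
      have h2 := Int.lt_floor_add_one ((M - a : ℚ) / q)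
      have h3 := Int.floor_le ((0 - a : ℚ) / q)
      have h4 := Int.lt_floor_add_one ((0 - a : ℚ) / q)
      have h5 : (M - a : ℚ) / q = M / q + (0 - a : ℚ) / q := by ring
      have h6 : (0 : ℚ) ≤ M / q := by positivity
      rw [abs_le]
      constructor
      · refine le_trans ?_ (sub_le_sub_right (le_max_left _ _) _)
        linarith
      · rw [sub_le_iff_le_add]
        exact max_le (by linarith) (by linarith)
    have hR := (Rat.cast_le (K := ℝ)).2 hQ
    push_cast at hR
    exact hR
  rw [tendsto_iff_dist_tendsto_zero]
  refine squeeze_zero' (Eventually.of_forall fun M => dist_nonneg) ?_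
    (tendsto_const_div_atTop_nhds_zero_nat (1 : ℝ))
  filter_upwards [eventually_gt_atTop 0] with M hM
  have hM0 : (0 : ℝ) < M := by exact_mod_cast hM
  have he : (1 / q : ℝ) = M / q / M := by field_simp
  rw [Real.dist_eq, he, ← sub_div, abs_div, abs_of_pos hM0]
  gcongr
  exact hbound M

theorem tendsto_card_floorValues_filter_mod {q : ℕ} (hq : 1 ≤ q) (a : ℕ) :
    Tendsto (fun N : ℕ => ((((Finset.Icc 1 N).image (fun n => N / n)).filter
      (fun m => m % q = a % q)).card : ℝ) / N.sqrt) atTop (𝓝 (2 / q)) := by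
  have hmain := ((tendsto_card_filter_mod hq a).comp tendsto_natSqrt_atTop).add
    (tendsto_card_filter_div_mod hq a)
  have hone : Tendsto (fun N : ℕ => 1 / (N.sqrt : ℝ)) atTop (𝓝 0) :=
    (tendsto_const_div_atTop_nhds_zero_nat (1 : ℝ)).comp tendsto_natSqrt_atTop
  have hlow := hmain.sub hone
  rw [sub_zero] at hlow
  have he : (1 / q + 1 / q : ℝ) = 2 / q := by ring
  rw [he] at hlow hmain
  refine tendsto_of_tendsto_of_tendsto_of_le_of_le hlow hmain (fun N => ?_) fun N => ?_
  all_goals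
    obtain ⟨δ, hδ, h⟩ := card_filter_image_div_add N (fun m => m % q = a % q)
    simp only [Function.comp_apply]
    rw [← add_div]
  · rw [← sub_div]
    gcongr
    have : (δ : ℝ) ≤ 1 := by exact_mod_cast hδ
    rw [← Nat.cast_add, ← h]
    push_cast
    linarith
  · gcongr
    rw [← Nat.cast_add, ← h]
    exact_mod_cast Nat.le_add_right _ _

open Filter in
theorem density_in_progression (q a : ℕ) (hq : 1 ≤ q) (ha1 : 1 ≤ a) (ha2 : a ≤ q) :
    Tendsto (fun x : ℝ =>
        ((((Finset.Icc 1 ⌊x⌋₊).image (fun n : ℕ => ⌊x / (n : ℝ)⌋₊)).filter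
            (fun m : ℕ => m % q = a % q)).card : ℝ) /
          (((Finset.Icc 1 ⌊x⌋₊).image (fun n : ℕ => ⌊x / (n : ℝ)⌋₊)).card : ℝ))
      atTop (nhds (1 / q)) := by
  have htotal := tendsto_card_floorValues_filter_mod le_rfl 0
  simp only [Nat.mod_one, Finset.filter_true, Nat.cast_one, div_one] at htotal
  have hratio := (tendsto_card_floorValues_filter_mod hq a).div htotal two_ne_zero
  have he : (2 / q / 2 : ℝ) = 1 / q := by ring
  rw [he] at hratio
  simp only [Nat.floor_div_natCast]
  refine (hratio.comp (tendsto_nat_floor_atTop (α := ℝ))).congr' ?_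
  filter_upwards [(tendsto_natSqrt_atTop.comp
    (tendsto_nat_floor_atTop (α := ℝ))).eventually_gt_atTop 0] with x hx
  have hM : ((⌊x⌋₊.sqrt : ℕ) : ℝ) ≠ 0 := by exact_mod_cast (show 0 < ⌊x⌋₊.sqrt from hx).ne'
  simp only [Function.comp_apply, Pi.div_apply]
  exact div_div_div_cancel_right₀ hM _ _
end
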